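/- arXiv:1702.06923 — 3 statements merged into one kernel-verified Lean document; each statement's English description precedes it below -/
import Mathlib

section
/- Let G be a finite group that decomposes as an internal direct product G = N × K of subgroups N and K. Then |M(G)| = |M(N)| · |M(K)| · |N^ab ⊗ K^ab|, where M denotes the Schur multiplier (second integral homology). -/
/-- The canonical presentation map `FreeGroup G →* G`. -/
def presentation (G : Type*) [Group G] : FreeGroup G →* G := FreeGroup.lift id

/-- The Schur multiplier `M(G) ≅ H₂(G, ℤ)` of a group `G`, defined via Hopf's formula
`M(G) = (R ∩ [F,F]) / [F,R]` for the free presentation `F = FreeGroup G`,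
`R = ker(F →* G)`. -/
def SchurMultiplier (G : Type*) [Group G] : Type _ :=
  ↥((presentation G).ker ⊓ commutator (FreeGroup G)) ⧸
    (⁅(⊤ : Subgroup (FreeGroup G)), (presentation G).ker⁆.subgroupOf
      ((presentation G).ker ⊓ commutator (FreeGroup G)))

noncomputable instance (G : Type*) [Group G] : Group (SchurMultiplier G) :=
  QuotientGroup.Quotient.group _

/-!
`M(G)` is the subgroup `ker p ⊓ [E, E]` of the central extension `p : E = F/[F, R] → G`. It can be
computed from any other central extension of `G` that maps to `E` over `G`, because homomorphisms
into a central extension that agree on the base agree on the derived subgroup.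

For `G = A × B`, let `T = Aᵃᵇ ⊗ Bᵃᵇ` and let `E_A`, `E_B` be the extensions above for `A` and `B`.
The Heisenberg group on `E_A × E_B × T`, in which the commutator of `b` and `a` is `a ⊗ b`, is a
central extension of `A × B`. It maps to the extension for `A × B` by sending `a ⊗ b` to the
commutator of lifts of `b` and `a`. Since `T` is generated by commutators, the intersection of the
kernel and the derived subgroup of the Heisenberg group is `M(A) × M(B) × T`.
-/

open scoped commutatorElement IsMulCommutative

section CentralExtensions

variable {A B E E' G G' X : Type*} [Group A] [Group B] [Group E] [Group E'] [Group G] [Group G']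
  [Group X]

theorem map_mem_commutator (f : E →* E') {x : E} (hx : x ∈ commutator E) :
    f x ∈ commutator E' := by
  have hle : (commutator E).map f ≤ commutator E' := by
    rw [map_commutator_eq]
    exact Subgroup.commutator_mono le_top le_top
  exact hle (Subgroup.mem_map_of_mem f hx)

/-- `p : E →* G` is a central extension of `G`: it is surjective with central kernel. -/
structure IsCentralExtension (p : E →* G) : Prop where
  surjective : Function.Surjective p
  ker_le_center : p.ker ≤ Subgroup.center E

/-- The subgroup `ker p ⊓ [E, E]` of a group `E` over `G`. For a free presentation `p` this is the
numerator of Hopf's formula. -/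
def commutatorKer (p : E →* G) : Subgroup E := p.ker ⊓ commutator E

variable {p : E →* G} {p' : E' →* G'}

theorem map_mem_commutatorKer {a : E →* E'} {f : G →* G'} (ha : p'.comp a = f.comp p) {x : E}
    (hx : x ∈ commutatorKer p) : a x ∈ commutatorKer p' := by
  refine ⟨?_, map_mem_commutator a hx.2⟩
  have hpx : p x = 1 := hx.1
  have hax : p' (a x) = f (p x) := DFunLike.congr_fun ha x
  exact hax.trans (by rw [hpx, map_one])

namespace IsCentralExtension

theorem commute_of_map_eq_one (hp : IsCentralExtension p) {z : E} (hz : p z = 1) (x : E) :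
    Commute x z :=
  Subgroup.mem_center_iff.1 (hp.ker_le_center hz) x

theorem commutatorElement_congr_left (hp : IsCentralExtension p) {x x' : E} (hx : p x = p x')
    (y : E) : ⁅x, y⁆ = ⁅x', y⁆ := by
  have hz : p (x'⁻¹ * x) = 1 := by simp [hx]
  have hcomm := (hp.commute_of_map_eq_one hz y).symm.commutator_eq
  calc ⁅x, y⁆ = ⁅x' * (x'⁻¹ * x), y⁆ := by rw [mul_inv_cancel_left]
    _ = ⁅x', y⁆ := by rw [commutatorElement_mul_left_eq_conj_mul, hcomm]; simp

theorem commutatorElement_congr (hp : IsCentralExtension p) {x x' y y' : E} (hx : p x = p x')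
    (hy : p y = p y') : ⁅x, y⁆ = ⁅x', y'⁆ := by
  rw [hp.commutatorElement_congr_left hx, ← commutatorElement_inv,
    hp.commutatorElement_congr_left hy, commutatorElement_inv]

theorem commutator_le_eqLocus (hp : IsCentralExtension p) {f g : X →* E}
    (hfg : p.comp f = p.comp g) : commutator X ≤ f.eqLocus g := by
  rw [commutator_def, Subgroup.commutator_le]
  intro x _ y _
  change f ⁅x, y⁆ = g ⁅x, y⁆
  rw [map_commutatorElement, map_commutatorElement]
  exact hp.commutatorElement_congr (DFunLike.congr_fun hfg x) (DFunLike.congr_fun hfg y)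

theorem apply_eq_self_of_mem_commutator (hp : IsCentralExtension p) {f : E →* E}
    (hf : p.comp f = p) {x : E} (hx : x ∈ commutator E) : f x = x :=
  hp.commutator_le_eqLocus (g := MonoidHom.id E) hf hx

/-- The isomorphism of `ker p ⊓ [E, E]` with `ker p' ⊓ [E', E']` given by central extensions `p`,
`p'` of isomorphic groups and homomorphisms between them in both directions. The homomorphisms need
not be inverse to each other. -/
def commutatorKerEquiv (hp : IsCentralExtension p) (hp' : IsCentralExtension p') (e : G ≃* G')
    (a : E →* E') (b : E' →* E) (ha : p'.comp a = e.toMonoidHom.comp p)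
    (hb : p.comp b = e.symm.toMonoidHom.comp p') : commutatorKer p ≃* commutatorKer p' where
  toFun x := ⟨a x, map_mem_commutatorKer ha x.2⟩
  invFun y := ⟨b y, map_mem_commutatorKer hb y.2⟩
  left_inv x := by
    have hba : p.comp (b.comp a) = p := by
      rw [← MonoidHom.comp_assoc, hb, MonoidHom.comp_assoc, ha]
      ext; simp
    exact Subtype.ext (hp.apply_eq_self_of_mem_commutator hba x.2.2)
  right_inv y := by
    have hab : p'.comp (a.comp b) = p' := by
      rw [← MonoidHom.comp_assoc, ha, MonoidHom.comp_assoc, hb]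
      ext; simp
    exact Subtype.ext (hp'.apply_eq_self_of_mem_commutator hab y.2.2)
  map_mul' x y := Subtype.ext (map_mul a x.1 y.1)

theorem commutatorElement_mem_center (hp : IsCentralExtension p) {x y : E}
    (hxy : Commute (p x) (p y)) : ⁅x, y⁆ ∈ Subgroup.center E :=
  hp.ker_le_center <| by rw [MonoidHom.mem_ker, map_commutatorElement, hxy.commutator_eq]

theorem commutatorElement_mul_left (hp : IsCentralExtension p) {x x' y : E}
    (hx' : Commute (p x') (p y)) : ⁅x * x', y⁆ = ⁅x, y⁆ * ⁅x', y⁆ := by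
  have hcenter := Subgroup.mem_center_iff.1 (hp.commutatorElement_mem_center hx')
  rw [commutatorElement_mul_left_eq_conj_mul, hcenter x, mul_inv_cancel_right, hcenter]

theorem commutatorElement_mul_right (hp : IsCentralExtension p) {x y y' : E}
    (hy' : Commute (p x) (p y')) : ⁅x, y * y'⁆ = ⁅x, y⁆ * ⁅x, y'⁆ := by
  have hcenter := Subgroup.mem_center_iff.1 (hp.commutatorElement_mem_center hy')
  rw [commutatorElement_mul_right_eq_mul_conj, mul_assoc ⁅x, y⁆, hcenter y, mul_assoc,
    mul_inv_cancel_right]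

/-- The pairing of `a : A` and `b : B` given by the commutator of a lift of `g b` and a lift of
`f a` to a central extension, where `f` and `g` have commuting images. The order of the commutator
is the one of `HeisenbergGroup`. -/
noncomputable def commutatorPairing (hp : IsCentralExtension p) (f : A →* G) (g : B →* G)
    (hfg : ∀ a b, Commute (f a) (g b)) : A →* B →* Subgroup.center E :=
  let lift := Function.surjInv hp.surjective
  have map_lift : ∀ x, p (lift x) = x := Function.surjInv_eq hp.surjective
  have commute_lift : ∀ a b, Commute (p (lift (g b))) (p (lift (f a))) := fun a b => by
    simpa only [map_lift] using (hfg a b).symm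
  MonoidHom.mk'
    (fun a => MonoidHom.mk'
      (fun b => ⟨⁅lift (g b), lift (f a)⁆, hp.commutatorElement_mem_center (commute_lift a b)⟩)
      fun b b' => Subtype.ext <|
        (hp.commutatorElement_congr (by simp only [map_mul, map_lift]) rfl).trans
          (hp.commutatorElement_mul_left (commute_lift a b')))
    fun a a' => MonoidHom.ext fun b => Subtype.ext <|
      (hp.commutatorElement_congr rfl (by simp only [map_mul, map_lift])).trans
        (hp.commutatorElement_mul_right (commute_lift a' b))

theorem coe_commutatorPairing (hp : IsCentralExtension p) {f : A →* G} {g : B →* G}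
    (hfg : ∀ a b, Commute (f a) (g b)) {a : A} {b : B} {x y : E} (hx : p x = f a)
    (hy : p y = g b) : (hp.commutatorPairing f g hfg a b : E) = ⁅y, x⁆ :=
  hp.commutatorElement_congr ((Function.surjInv_eq _ _).trans hy.symm)
    ((Function.surjInv_eq _ _).trans hx.symm)

end IsCentralExtension

end CentralExtensions

/-- The group `F/[F, R]`, where `F = FreeGroup G` and `R` is the kernel of the canonical
presentation of `G`. It maps to every central extension of `G`. -/
abbrev FreeCentralExtension (G : Type*) [Group G] : Type _ :=
  FreeGroup G ⧸ ⁅(⊤ : Subgroup (FreeGroup G)), (presentation G).ker⁆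

namespace FreeCentralExtension

variable {E G H : Type*} [Group E] [Group G] [Group H]

/-- The projection `F/[F, R] →* G`. -/
def proj (G : Type*) [Group G] : FreeCentralExtension G →* G :=
  QuotientGroup.lift _ (presentation G) (Subgroup.commutator_le_right _ _)

theorem isCentralExtension_proj (G : Type*) [Group G] : IsCentralExtension (proj G) where
  surjective g := ⟨(FreeGroup.of g : FreeGroup G), FreeGroup.lift_apply_of⟩
  ker_le_center := by
    intro z hz
    obtain ⟨r, rfl⟩ := QuotientGroup.mk_surjective z
    refine Subgroup.mem_center_iff.2 fun x => ?_
    obtain ⟨w, rfl⟩ := QuotientGroup.mk_surjective x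
    exact commutatorElement_eq_one_iff_mul_comm.1 <| (QuotientGroup.eq_one_iff ⁅w, r⁆).2 <|
      Subgroup.commutator_mem_commutator (Subgroup.mem_top w) hz

section lift

variable {p : E →* H} (hp : IsCentralExtension p) (f : G →* H)

/-- The homomorphism from the free group on `G` to a central extension of `H` that sends each
generator `g` to a chosen lift of `f g`. -/
noncomputable def freeLift : FreeGroup G →* E :=
  FreeGroup.lift fun g => Function.surjInv hp.surjective (f g)

theorem comp_freeLift : p.comp (freeLift hp f) = f.comp (presentation G) := by
  ext g
  simp [freeLift, presentation, Function.surjInv_eq]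

/-- A lift of `f : G →* H` to a homomorphism from `F/[F, R]` to a given central extension of
`H`. -/
noncomputable def lift : FreeCentralExtension G →* E :=
  QuotientGroup.lift _ (freeLift hp f) <| by
    rw [Subgroup.commutator_le]
    intro w _ r hr
    have hpr : p (freeLift hp f r) = 1 := by
      rw [← MonoidHom.comp_apply, comp_freeLift, MonoidHom.comp_apply, hr, map_one]
    rw [MonoidHom.mem_ker, map_commutatorElement, (hp.commute_of_map_eq_one hpr _).commutator_eq]

theorem comp_lift : p.comp (lift hp f) = f.comp (proj G) :=
  QuotientGroup.monoidHom_ext _ (comp_freeLift hp f)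

end lift

end FreeCentralExtension

/-- The Heisenberg group of a pairing `β : A →* B →* T`: the set `A × B × T` with multiplication
`(a, b, t) * (a', b', t') = (a * a', b * b', t * t' * β a' b)`. The twist is chosen so that the
commutator of `b` and `a` is `β a b`. -/
@[ext]
structure HeisenbergGroup {A B T : Type*} [Group A] [Group B] [CommGroup T]
    (β : A →* B →* T) where
  left : A
  right : B
  central : T

namespace HeisenbergGroup

variable {A B E G H T : Type*} [Group A] [Group B] [Group E] [Group G] [Group H] [CommGroup T]

section group

variable {β : A →* B →* T}

instance : Mul (HeisenbergGroup β) :=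
  ⟨fun x y => ⟨x.left * y.left, x.right * y.right, x.central * y.central * β y.left x.right⟩⟩

instance : One (HeisenbergGroup β) := ⟨⟨1, 1, 1⟩⟩

instance : Inv (HeisenbergGroup β) :=
  ⟨fun x => ⟨x.left⁻¹, x.right⁻¹, x.central⁻¹ * β x.left x.right⟩⟩

@[simp] theorem mul_left (x y : HeisenbergGroup β) : (x * y).left = x.left * y.left := rfl
@[simp] theorem mul_right (x y : HeisenbergGroup β) : (x * y).right = x.right * y.right := rfl
@[simp] theorem mul_central (x y : HeisenbergGroup β) :
    (x * y).central = x.central * y.central * β y.left x.right := rfl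
@[simp] theorem one_left : (1 : HeisenbergGroup β).left = 1 := rfl
@[simp] theorem one_right : (1 : HeisenbergGroup β).right = 1 := rfl
@[simp] theorem one_central : (1 : HeisenbergGroup β).central = 1 := rfl
@[simp] theorem inv_left (x : HeisenbergGroup β) : x⁻¹.left = x.left⁻¹ := rfl
@[simp] theorem inv_right (x : HeisenbergGroup β) : x⁻¹.right = x.right⁻¹ := rfl
@[simp] theorem inv_central (x : HeisenbergGroup β) :
    x⁻¹.central = x.central⁻¹ * β x.left x.right := rfl

instance : Group (HeisenbergGroup β) :=
  Group.ofLeftAxioms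
    (fun x y z => by
      ext
      · simp [mul_assoc]
      · simp [mul_assoc]
      · simp only [mul_central, mul_left, mul_right, map_mul, MonoidHom.mul_apply]
        grind)
    (fun x => by ext <;> simp)
    (fun x => by ext <;> simp)

end group

section homs

variable (β : A →* B →* T)

/-- The inclusion of the first factor. -/
@[simps] def inl : A →* HeisenbergGroup β where
  toFun a := ⟨a, 1, 1⟩
  map_one' := rfl
  map_mul' _ _ := by ext <;> simp

/-- The inclusion of the second factor. -/
@[simps] def inr : B →* HeisenbergGroup β where
  toFun b := ⟨1, b, 1⟩
  map_one' := rfl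
  map_mul' _ _ := by ext <;> simp

/-- The inclusion of the third, central factor. -/
@[simps] def inCentral : T →* HeisenbergGroup β where
  toFun t := ⟨1, 1, t⟩
  map_one' := rfl
  map_mul' _ _ := by ext <;> simp

/-- The projection to the first two factors. -/
@[simps] def toProd : HeisenbergGroup β →* A × B where
  toFun x := (x.left, x.right)
  map_one' := rfl
  map_mul' _ _ := rfl

theorem inl_mul_inr_mul_inCentral (x : HeisenbergGroup β) :
    inl β x.left * inr β x.right * inCentral β x.central = x := by
  ext <;> simp

theorem commutatorElement_inr_inl (a : A) (b : B) :
    ⁅inr β b, inl β a⁆ = inCentral β (β a b) := by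
  rw [commutatorElement_def, mul_inv_eq_iff_eq_mul, mul_inv_eq_iff_eq_mul]
  ext <;> simp

end homs

section lift

variable {β : A →* B →* T} (f : A →* E) (g : B →* E) (h : T →* Subgroup.center E)

theorem lift_map_mul (hβ : ∀ a b, (h (β a b) : E) = ⁅g b, f a⁆) (x y : HeisenbergGroup β) :
    f (x * y).left * g (x * y).right * h (x * y).central =
      f x.left * g x.right * h x.central * (f y.left * g y.right * h y.central) := by
  have hcenter (t : T) (u : E) : u * h t = h t * u := Subgroup.mem_center_iff.1 (h t).2 u
  have hswap : f y.left * h (β y.left x.right) * g x.right = g x.right * f y.left := by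
    rw [hcenter, hβ, commutatorElement_def]
    group
  calc f (x * y).left * g (x * y).right * h (x * y).central
    _ = f x.left * f y.left * (g x.right * g y.right * h x.central * h y.central) *
          h (β y.left x.right) := by simp [mul_assoc]
    _ = f x.left * (f y.left * h (β y.left x.right) * g x.right) * (g y.right * h x.central) *
          h y.central := by rw [mul_assoc _ _ (h _ : E), hcenter (β _ _)]; group
    _ = f x.left * g x.right * (f y.left * g y.right * h x.central) * h y.central := by
      rw [hswap]; group
    _ = f x.left * g x.right * h x.central * (f y.left * g y.right * h y.central) := by
      rw [hcenter x.central]; group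

/-- The homomorphism `(a, b, t) ↦ f a * g b * h t` for a central homomorphism `h` that sends the
pairing to the commutator of `g` and `f`. -/
def lift (hβ : ∀ a b, (h (β a b) : E) = ⁅g b, f a⁆) : HeisenbergGroup β →* E :=
  MonoidHom.mk' (fun x => f x.left * g x.right * h x.central) (lift_map_mul f g h hβ)

variable {f g h} (hβ : ∀ a b, (h (β a b) : E) = ⁅g b, f a⁆)

theorem lift_comp_inl : (lift f g h hβ).comp (inl β) = f := by
  ext; simp [lift]

theorem lift_comp_inr : (lift f g h hβ).comp (inr β) = g := by
  ext; simp [lift]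

end lift

section generated

variable {β : A →* B →* T}

theorem range_inCentral_le_commutator (hβ : Subgroup.closure {t | ∃ a b, β a b = t} = ⊤) :
    (inCentral β).range ≤ commutator (HeisenbergGroup β) := by
  rw [MonoidHom.range_eq_map, ← hβ, Subgroup.map_le_iff_le_comap, Subgroup.closure_le]
  rintro _ ⟨a, b, rfl⟩
  rw [SetLike.mem_coe, Subgroup.mem_comap, ← commutatorElement_inr_inl]
  exact Subgroup.commutator_mem_commutator (Subgroup.mem_top _) (Subgroup.mem_top _)

theorem mem_commutator_iff (hβ : Subgroup.closure {t | ∃ a b, β a b = t} = ⊤)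
    {x : HeisenbergGroup β} :
    x ∈ commutator (HeisenbergGroup β) ↔ x.left ∈ commutator A ∧ x.right ∈ commutator B := by
  refine ⟨fun hx => ⟨map_mem_commutator ((MonoidHom.fst A B).comp (toProd β)) hx,
    map_mem_commutator ((MonoidHom.snd A B).comp (toProd β)) hx⟩, fun ⟨hleft, hright⟩ => ?_⟩
  rw [← inl_mul_inr_mul_inCentral β x]
  exact mul_mem (mul_mem (map_mem_commutator _ hleft) (map_mem_commutator _ hright))
    (range_inCentral_le_commutator hβ ⟨x.central, rfl⟩)

theorem hom_ext (hβ : Subgroup.closure {t | ∃ a b, β a b = t} = ⊤)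
    {φ ψ : HeisenbergGroup β →* E} (hl : φ.comp (inl β) = ψ.comp (inl β))
    (hr : φ.comp (inr β) = ψ.comp (inr β)) : φ = ψ := by
  have hinl (a : A) : φ (inl β a) = ψ (inl β a) := DFunLike.congr_fun hl a
  have hinr (b : B) : φ (inr β b) = ψ (inr β b) := DFunLike.congr_fun hr b
  have hcentral : φ.comp (inCentral β) = ψ.comp (inCentral β) := by
    refine MonoidHom.eq_of_eqOn_dense hβ ?_
    rintro _ ⟨a, b, rfl⟩
    simp only [MonoidHom.comp_apply, ← commutatorElement_inr_inl, map_commutatorElement, hinl, hinr]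
  ext x
  rw [← inl_mul_inr_mul_inCentral β x]
  simp only [map_mul, hinl, hinr]
  congr 1
  exact DFunLike.congr_fun hcentral x.central

end generated

section projection

variable (p : A →* G) (q : B →* H)

/-- The Heisenberg group of a pairing of groups over `G` and `H`, as a group over `G × H`. -/
def proj (β : A →* B →* T) : HeisenbergGroup β →* G × H := (p.prodMap q).comp (toProd β)

variable {p q} {β : A →* B →* T}

theorem mem_ker_proj_iff {x : HeisenbergGroup β} :
    x ∈ (proj p q β).ker ↔ x.left ∈ p.ker ∧ x.right ∈ q.ker :=
  Prod.mk_eq_one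

theorem isCentralExtension_proj (hp : IsCentralExtension p) (hq : IsCentralExtension q)
    (hl : p.ker ≤ β.ker) (hr : q.ker ≤ β.flip.ker) : IsCentralExtension (proj p q β) where
  surjective := (hp.surjective.prodMap hq.surjective).comp
    fun y => ⟨⟨y.1, y.2, 1⟩, rfl⟩
  ker_le_center x hx := by
    obtain ⟨hleft, hright⟩ := mem_ker_proj_iff.1 hx
    have hβl (b : B) : β x.left b = 1 := DFunLike.congr_fun (hl hleft) b
    have hβr (a : A) : β a x.right = 1 := DFunLike.congr_fun (hr hright) a
    refine Subgroup.mem_center_iff.2 fun y => ?_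
    ext
    · exact hp.commute_of_map_eq_one hleft y.left
    · exact hq.commute_of_map_eq_one hright y.right
    · simp [hβl, hβr, mul_comm]

theorem mem_commutatorKer_proj_iff (hβ : Subgroup.closure {t | ∃ a b, β a b = t} = ⊤)
    {x : HeisenbergGroup β} : x ∈ commutatorKer (proj p q β) ↔
      x.left ∈ commutatorKer p ∧ x.right ∈ commutatorKer q := by
  simp only [commutatorKer, Subgroup.mem_inf, mem_ker_proj_iff, mem_commutator_iff hβ]
  exact and_and_and_comm

/-- The decomposition of `ker ⊓ [-, -]` for a Heisenberg group whose pairing generates the central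
factor and is trivial on `ker p` (and so has trivial twist there). -/
def commutatorKerProjEquiv (hβ : Subgroup.closure {t | ∃ a b, β a b = t} = ⊤)
    (hl : p.ker ≤ β.ker) :
    commutatorKer (proj p q β) ≃* commutatorKer p × commutatorKer q × T where
  toFun x := (⟨x.1.left, ((mem_commutatorKer_proj_iff hβ).1 x.2).1⟩,
    ⟨x.1.right, ((mem_commutatorKer_proj_iff hβ).1 x.2).2⟩, x.1.central)
  invFun y := ⟨⟨y.1, y.2.1, y.2.2⟩, (mem_commutatorKer_proj_iff hβ).2 ⟨y.1.2, y.2.1.2⟩⟩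
  left_inv _ := rfl
  right_inv _ := rfl
  map_mul' x y := by
    have htwist : β y.1.left x.1.right = 1 :=
      DFunLike.congr_fun (hl (mem_ker_proj_iff.1 y.2.1).1) x.1.right
    ext <;> simp [htwist]

end projection

end HeisenbergGroup

/-- The tensor product `Aᵃᵇ ⊗ Bᵃᵇ`, written multiplicatively. -/
abbrev AbelianizationTensor (A B : Type*) [Group A] [Group B] : Type _ :=
  Multiplicative (TensorProduct ℤ (Additive (Abelianization A)) (Additive (Abelianization B)))

namespace AbelianizationTensor

variable {A B Z : Type*} [Group A] [Group B] [CommGroup Z]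

/-- The universal pairing `(a, b) ↦ a ⊗ b` of two groups. -/
def pairing (A B : Type*) [Group A] [Group B] : A →* B →* AbelianizationTensor A B :=
  MonoidHom.mk'
    (fun a => MonoidHom.mk'
      (fun b => Multiplicative.ofAdd <| TensorProduct.tmul ℤ
        (Additive.ofMul (Abelianization.of a)) (Additive.ofMul (Abelianization.of b)))
      fun b b' => by simp [TensorProduct.tmul_add])
    fun a a' => by ext b; simp [TensorProduct.add_tmul]

theorem closure_pairing (A B : Type*) [Group A] [Group B] :
    Subgroup.closure {t | ∃ a b, pairing A B a b = t} = ⊤ := by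
  refine eq_top_iff.2 fun t _ => ?_
  induction t using Multiplicative.rec with | ofAdd s
  induction s using TensorProduct.induction_on with
  | zero => exact one_mem _
  | add x y hx hy => exact mul_mem (hx trivial) (hy trivial)
  | tmul x y =>
    obtain ⟨a, ha⟩ := QuotientGroup.mk_surjective x.toMul
    obtain ⟨b, hb⟩ := QuotientGroup.mk_surjective y.toMul
    exact Subgroup.subset_closure ⟨a, b, congrArg₂ (TensorProduct.tmul ℤ) ha hb⟩

/-- The homomorphism out of `Aᵃᵇ ⊗ Bᵃᵇ` induced by a pairing of `A` and `B`. -/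
def lift (γ : A →* B →* Z) : AbelianizationTensor A B →* Z :=
  let γab : Abelianization A →* Abelianization B →* Z :=
    Abelianization.lift <| MonoidHom.mk' (fun a => Abelianization.lift (γ a))
      fun a a' => by ext; simp
  AddMonoidHom.toMultiplicativeLeft <| TensorProduct.liftAddHom
    (AddMonoidHom.mk' (fun a => MonoidHom.toAdditive (γab a.toMul)) fun a a' => by ext; simp)
    fun n a b => by simp

@[simp]
theorem lift_pairing (γ : A →* B →* Z) (a : A) (b : B) : lift γ (pairing A B a b) = γ a b := by
  simp [lift, pairing]

end AbelianizationTensor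

namespace SchurMultiplier

open FreeCentralExtension

/-- The restriction of `F →* F/[F, R]` to the numerator `R ⊓ [F, F]` of Hopf's formula. -/
def restrictMk (G : Type*) [Group G] :
    ↥((presentation G).ker ⊓ commutator (FreeGroup G)) →* FreeCentralExtension G :=
  (QuotientGroup.mk' _).comp (Subgroup.subtype _)

theorem ker_restrictMk (G : Type*) [Group G] : (restrictMk G).ker =
    ⁅(⊤ : Subgroup (FreeGroup G)), (presentation G).ker⁆.subgroupOf
      ((presentation G).ker ⊓ commutator (FreeGroup G)) := by
  rw [restrictMk, ← MonoidHom.comap_ker, QuotientGroup.ker_mk', Subgroup.subgroupOf]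

theorem range_restrictMk (G : Type*) [Group G] : (restrictMk G).range = commutatorKer (proj G) := by
  ext x
  constructor
  · rintro ⟨w, rfl⟩
    exact ⟨w.2.1, map_mem_commutator (QuotientGroup.mk' _) w.2.2⟩
  · rintro ⟨hker, hcomm⟩
    have hmap : commutator (FreeCentralExtension G) = (commutator (FreeGroup G)).map
        (QuotientGroup.mk' _) := by
      rw [map_commutator_eq, QuotientGroup.range_mk', commutator_def]
    obtain ⟨w, hw, rfl⟩ := hmap.le hcomm
    exact ⟨⟨w, hker, hw⟩, rfl⟩

/-- Hopf's formula read inside `F/[F, R]`. -/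
noncomputable def equivCommutatorKer (G : Type*) [Group G] :
    SchurMultiplier G ≃* commutatorKer (proj G) :=
  (QuotientGroup.quotientMulEquivOfEq (ker_restrictMk G).symm).trans <|
    (QuotientGroup.quotientKerEquivRange (restrictMk G)).trans
      (MulEquiv.subgroupCongr (range_restrictMk G))

/-- Isomorphic groups have isomorphic Schur multipliers. -/
noncomputable def congr {G G' : Type*} [Group G] [Group G'] (e : G ≃* G') :
    SchurMultiplier G ≃* SchurMultiplier G' :=
  let hG := isCentralExtension_proj G
  let hG' := isCentralExtension_proj G'
  (equivCommutatorKer G).trans <|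
    (hG.commutatorKerEquiv hG' e (lift hG' e.toMonoidHom) (lift hG e.symm.toMonoidHom)
      (comp_lift _ _) (comp_lift _ _)).trans
    (equivCommutatorKer G').symm

section prod

variable (A B : Type*) [Group A] [Group B]

/-- The pairing of `F/[F, R]` for `A` and `B` with values in `Aᵃᵇ ⊗ Bᵃᵇ`. -/
def coverPairing :
    FreeCentralExtension A →* FreeCentralExtension B →* AbelianizationTensor A B :=
  ((AbelianizationTensor.pairing A B).comp (proj A)).compl₂ (proj B)

theorem closure_coverPairing : Subgroup.closure {t | ∃ x y, coverPairing A B x y = t} = ⊤ := by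
  rw [← AbelianizationTensor.closure_pairing A B]
  congr 1
  ext t
  exact ((isCentralExtension_proj A).surjective.exists.trans <| exists_congr fun _ =>
    (isCentralExtension_proj B).surjective.exists).symm

theorem ker_proj_le_ker_coverPairing : (proj A).ker ≤ (coverPairing A B).ker := by
  intro x hx
  ext y
  simp [coverPairing, MonoidHom.mem_ker.1 hx]

theorem ker_proj_le_ker_flip_coverPairing : (proj B).ker ≤ (coverPairing A B).flip.ker := by
  intro y hy
  ext x
  simp [coverPairing, MonoidHom.mem_ker.1 hy]

/-- The Heisenberg group of `coverPairing A B`, as a group over `A × B`. -/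
def heisenbergProj : HeisenbergGroup (coverPairing A B) →* A × B :=
  HeisenbergGroup.proj (proj A) (proj B) (coverPairing A B)

theorem isCentralExtension_heisenbergProj : IsCentralExtension (heisenbergProj A B) :=
  HeisenbergGroup.isCentralExtension_proj (isCentralExtension_proj A) (isCentralExtension_proj B)
    (ker_proj_le_ker_coverPairing A B) (ker_proj_le_ker_flip_coverPairing A B)

theorem exists_proj_comp_eq_heisenbergProj :
    ∃ s : HeisenbergGroup (coverPairing A B) →* FreeCentralExtension (A × B),
      (proj (A × B)).comp s = heisenbergProj A B := by
  have hAB := isCentralExtension_proj (A × B)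
  let f := lift hAB (MonoidHom.inl A B)
  let g := lift hAB (MonoidHom.inr A B)
  have hf : (proj (A × B)).comp f = (MonoidHom.inl A B).comp (proj A) := comp_lift _ _
  have hg : (proj (A × B)).comp g = (MonoidHom.inr A B).comp (proj B) := comp_lift _ _
  let γ := hAB.commutatorPairing (MonoidHom.inl A B) (MonoidHom.inr A B) MonoidHom.commute_inl_inr
  have hγ (x y) : (AbelianizationTensor.lift γ (coverPairing A B x y) :
      FreeCentralExtension (A × B)) = ⁅g y, f x⁆ :=
    (congrArg _ (AbelianizationTensor.lift_pairing γ _ _)).trans <|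
      hAB.coe_commutatorPairing _ (DFunLike.congr_fun hf x) (DFunLike.congr_fun hg y)
  refine ⟨HeisenbergGroup.lift f g (AbelianizationTensor.lift γ) hγ,
    HeisenbergGroup.hom_ext (closure_coverPairing A B) ?_ ?_⟩
  · rw [MonoidHom.comp_assoc, HeisenbergGroup.lift_comp_inl, hf]
    ext <;> simp [heisenbergProj, HeisenbergGroup.proj]
  · rw [MonoidHom.comp_assoc, HeisenbergGroup.lift_comp_inr, hg]
    ext <;> simp [heisenbergProj, HeisenbergGroup.proj]

/-- The Künneth decomposition of the Schur multiplier of a direct product. -/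
noncomputable def prodEquiv : SchurMultiplier (A × B) ≃*
    SchurMultiplier A × SchurMultiplier B × AbelianizationTensor A B :=
  let hAB := isCentralExtension_proj (A × B)
  let hH := isCentralExtension_heisenbergProj A B
  let hs := exists_proj_comp_eq_heisenbergProj A B
  (equivCommutatorKer (A × B)).trans <|
    (hAB.commutatorKerEquiv hH (MulEquiv.refl _) (lift hH (MonoidHom.id _)) hs.choose
      (comp_lift _ _) hs.choose_spec).trans <|
    (HeisenbergGroup.commutatorKerProjEquiv (closure_coverPairing A B)
      (ker_proj_le_ker_coverPairing A B)).trans <|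
    (equivCommutatorKer A).symm.prodCongr <|
      (equivCommutatorKer B).symm.prodCongr (MulEquiv.refl _)

end prod

end SchurMultiplier

/-- The isomorphism `N × K ≃* G` for an internal direct product `G` of normal subgroups `N` and
`K`. -/
noncomputable def internalProdEquiv {G : Type*} [Group G] (N K : Subgroup G) [N.Normal] [K.Normal]
    (hinf : N ⊓ K = ⊥) (hsup : N ⊔ K = ⊤) : N × K ≃* G :=
  have hcomm (n : N) (k : K) : Commute (N.subtype n) (K.subtype k) :=
    Subgroup.commute_of_normal_of_disjoint N K ‹_› ‹_› (disjoint_iff.2 hinf) n k n.2 k.2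
  MulEquiv.ofBijective (N.subtype.noncommCoprod K.subtype hcomm)
    ⟨(MonoidHom.noncommCoprod_injective _ _ _).2 ⟨N.subtype_injective, K.subtype_injective, by
      simpa only [Subgroup.range_subtype] using disjoint_iff.2 hinf⟩,
    MonoidHom.range_eq_top.1 <| by
      rw [MonoidHom.noncommCoprod_range, Subgroup.range_subtype, Subgroup.range_subtype, hsup]⟩

theorem card_schur_multiplier_internal_direct_product_general (G : Type*) [Group G]
    (N K : Subgroup G) [N.Normal] [K.Normal] (hinf : N ⊓ K = ⊥) (hsup : N ⊔ K = ⊤) :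
    Nat.card (SchurMultiplier G) =
      Nat.card (SchurMultiplier N) * Nat.card (SchurMultiplier K) *
        Nat.card (TensorProduct ℤ (Additive (Abelianization N))
          (Additive (Abelianization K))) := by
  let e := (SchurMultiplier.congr (internalProdEquiv N K hinf hsup)).symm.trans
    (SchurMultiplier.prodEquiv N K)
  rw [Nat.card_congr e.toEquiv, Nat.card_prod, Nat.card_prod, mul_assoc]
  rfl

theorem card_schur_multiplier_internal_direct_product (G : Type*) [Group G] [Finite G]
    (N K : Subgroup G) [N.Normal] [K.Normal] (hinf : N ⊓ K = ⊥) (hsup : N ⊔ K = ⊤) :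
    Nat.card (SchurMultiplier G) =
      Nat.card (SchurMultiplier N) * Nat.card (SchurMultiplier K) *
        Nat.card (TensorProduct ℤ (Additive (Abelianization N))
          (Additive (Abelianization K))) :=
  card_schur_multiplier_internal_direct_product_general G N K hinf hsup
end

section
/- Let p be a prime and G an abelian group of order pⁿ whose Schur multiplier has order p^{n(n−1)/2 − 4}. Then G is isomorphic to ℤ/p² × ℤ/p² or to ℤ/p² × (ℤ/p)³. -/
/-!
Write `G = F / R`. As `G` is abelian, `[F, F] ≤ R`, so the Schur multiplier of `G` is the commutator
subgroup of `Q = F / [F, R]`, a group of class at most two. If `G` is the product of the groups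
`ℤ/m i`, then `[Q, Q]` is generated by the commutators `[t i, t j]`, `i < j`, of lifts of the
generators, and bilinearity of commutators makes the order of `[t i, t j]` divide
`gcd (m i) (m j)`. Conversely, `F` maps to every central extension of `G`, killing `[F, R]`,
and in the one with the bilinear cocycle `(x, y) ↦ (x i * y j)` for `i < j` these commutators are
independent and of order exactly `gcd (m i) (m j)`. Hence the multiplier has order
`∏ i < j, gcd (m i) (m j)`.

For `m i = p ^ e i` the hypothesis becomes `∑ i, ∑ j, (e i * e j - min (e i) (e j)) = 8`. All
summands are nonnegative and those with `e i ≥ 2` are positive, so that only the exponents `(2, 2)`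
and `(2, 1, 1, 1)` remain.
-/

open scoped commutatorElement

section Commutators

variable {Q ι : Type*} [Group Q]

lemma card_closure_range_dvd_prod_orderOf [Fintype ι] (g : ι → Q)
    (hcomm : ∀ i j, Commute (g i) (g j)) :
    Nat.card (Subgroup.closure (Set.range g)) ∣ ∏ i, orderOf (g i) := by
  have hzpowers : Pairwise fun i j => ∀ x y : Q,
      x ∈ Subgroup.zpowers (g i) → y ∈ Subgroup.zpowers (g j) → Commute x y := by
    rintro i j - _ _ ⟨k, rfl⟩ ⟨l, rfl⟩
    exact (hcomm i j).zpow_zpow k l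
  have hrange : (Subgroup.noncommPiCoprod hzpowers).range = Subgroup.closure (Set.range g) := by
    rw [Subgroup.noncommPiCoprod_range, ← Set.iUnion_singleton_eq_range, Subgroup.closure_iUnion]
    simp only [Subgroup.zpowers_eq_closure]
  rw [← hrange]
  simpa only [Nat.card_pi, Nat.card_zpowers] using
    Subgroup.card_range_dvd (Subgroup.noncommPiCoprod hzpowers)

lemma commutatorElement_mem_center (hQ : commutator Q ≤ Subgroup.center Q) (x y : Q) :
    ⁅x, y⁆ ∈ Subgroup.center Q :=
  hQ (Subgroup.commutator_mem_commutator (Subgroup.mem_top x) (Subgroup.mem_top y))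

/-- The homomorphism `y ↦ ⁅x, y⁆` of a group of nilpotency class at most two. -/
def commutatorRightHom (hQ : commutator Q ≤ Subgroup.center Q) (x : Q) : Q →* Q where
  toFun y := ⁅x, y⁆
  map_one' := commutatorElement_one_right x
  map_mul' y z := by
    have hcomm := Subgroup.mem_center_iff.1 (commutatorElement_mem_center hQ x z) y
    rw [commutatorElement_mul_right_eq_mul_conj, mul_assoc _ y, hcomm]
    group

variable {t : ι → Q}

lemma commutatorElement_mem_of_closure_sup_center_eq_top
    (hQ : commutator Q ≤ Subgroup.center Q)
    (ht : Subgroup.closure (Set.range t) ⊔ Subgroup.center Q = ⊤) (D : Subgroup Q) (x y : Q)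
    (hx : ∀ i, ⁅x, t i⁆ ∈ D) : ⁅x, y⁆ ∈ D := by
  suffices htop : ⊤ ≤ D.comap (commutatorRightHom hQ x) from htop (Subgroup.mem_top y)
  rw [← ht, sup_le_iff, Subgroup.closure_le]
  refine ⟨Set.range_subset_iff.2 hx, fun z hz => ?_⟩
  have hone : ⁅x, z⁆ = 1 :=
    commutatorElement_eq_one_iff_mul_comm.2 (Subgroup.mem_center_iff.1 hz x)
  exact (show ⁅x, z⁆ ∈ D from hone ▸ D.one_mem)

/-- The pairs `i < j` of elements of `ι`, as an index type. -/
abbrev LTPair (ι : Type*) [LT ι] : Type _ := {q : ι × ι // q.1 < q.2}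

variable [LinearOrder ι]

lemma commutator_eq_closure_of_closure_sup_center_eq_top
    (hQ : commutator Q ≤ Subgroup.center Q)
    (ht : Subgroup.closure (Set.range t) ⊔ Subgroup.center Q = ⊤) :
    commutator Q = Subgroup.closure (Set.range fun q : LTPair ι => ⁅t q.1.1, t q.1.2⁆) := by
  set D := Subgroup.closure (Set.range fun q : LTPair ι => ⁅t q.1.1, t q.1.2⁆)
  have mem_D_of_lt {i j : ι} (hij : i < j) : ⁅t i, t j⁆ ∈ D :=
    Subgroup.subset_closure ⟨⟨(i, j), hij⟩, rfl⟩
  have mem_D_swap {x y : Q} (hxy : ⁅x, y⁆ ∈ D) : ⁅y, x⁆ ∈ D :=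
    commutatorElement_inv x y ▸ D.inv_mem hxy
  have generators_mem (i j : ι) : ⁅t i, t j⁆ ∈ D := by
    rcases lt_trichotomy i j with hij | rfl | hij
    · exact mem_D_of_lt hij
    · exact (commutatorElement_self (t i)).symm ▸ D.one_mem
    · exact mem_D_swap (mem_D_of_lt hij)
  refine le_antisymm (Subgroup.commutator_le.2 fun x _ y _ => ?_) ?_
  · exact commutatorElement_mem_of_closure_sup_center_eq_top hQ ht D x y fun i => mem_D_swap <|
      commutatorElement_mem_of_closure_sup_center_eq_top hQ ht D (t i) x (generators_mem i)
  · rw [Subgroup.closure_le, Set.range_subset_iff]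
    exact fun q => Subgroup.commutator_mem_commutator (Subgroup.mem_top _) (Subgroup.mem_top _)

lemma orderOf_commutatorElement_dvd_gcd (hQ : commutator Q ≤ Subgroup.center Q) {x y : Q}
    {k l : ℕ} (hx : x ^ k ∈ Subgroup.center Q) (hy : y ^ l ∈ Subgroup.center Q) :
    orderOf ⁅x, y⁆ ∣ Nat.gcd k l := by
  have orderOf_dvd (x : Q) {y : Q} {l : ℕ} (hy : y ^ l ∈ Subgroup.center Q) :
      orderOf ⁅x, y⁆ ∣ l := by
    refine orderOf_dvd_of_pow_eq_one ((map_pow (commutatorRightHom hQ x) y l).symm.trans ?_)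
    exact commutatorElement_eq_one_iff_mul_comm.2 (Subgroup.mem_center_iff.1 hy x)
  refine Nat.dvd_gcd ?_ (orderOf_dvd x hy)
  rw [← orderOf_inv, commutatorElement_inv]
  exact orderOf_dvd y hx

lemma card_commutator_dvd_prod_gcd [Fintype ι] (hQ : commutator Q ≤ Subgroup.center Q)
    (ht : Subgroup.closure (Set.range t) ⊔ Subgroup.center Q = ⊤) {m : ι → ℕ}
    (hm : ∀ i, t i ^ m i ∈ Subgroup.center Q) :
    Nat.card (commutator Q) ∣ ∏ q : LTPair ι, Nat.gcd (m q.1.1) (m q.1.2) := by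
  rw [commutator_eq_closure_of_closure_sup_center_eq_top hQ ht]
  refine (card_closure_range_dvd_prod_orderOf _ fun q r => ?_).trans <|
    Finset.prod_dvd_prod_of_dvd _ _ fun q _ =>
      orderOf_commutatorElement_dvd_gcd hQ (hm q.1.1) (hm q.1.2)
  exact Subgroup.mem_center_iff.1 (commutatorElement_mem_center hQ _ _) _

end Commutators

/-- The subgroup `[F, R]` for the canonical presentation `G = F / R`. -/
abbrev relatorCommutator (G : Type*) [Group G] : Subgroup (FreeGroup G) :=
  ⁅(⊤ : Subgroup (FreeGroup G)), (presentation G).ker⁆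

/-- The projection of the free group `F` onto `F / [F, R]`, the quotient of `F` in which the
relators `R` of `G` become central. -/
def freeCentralExtensionMk (G : Type*) [Group G] :
    FreeGroup G →* FreeGroup G ⧸ relatorCommutator G :=
  QuotientGroup.mk' _

/-- The central extension of `G` by `B` whose cocycle is the bilinear map `f`: the set `G × B`
with the product `(x, b) * (y, c) = (x * y, b * c * f x y)`. -/
@[ext] structure BilinearExtension {G B : Type*} [CommGroup G] [CommGroup B]
    (f : G →* G →* B) where
  base : G
  fiber : B

namespace BilinearExtension

variable {G B : Type*} [CommGroup G] [CommGroup B] (f : G →* G →* B)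

instance : Mul (BilinearExtension f) :=
  ⟨fun x y => ⟨x.base * y.base, x.fiber * y.fiber * f x.base y.base⟩⟩

instance : One (BilinearExtension f) := ⟨⟨1, 1⟩⟩

instance : Inv (BilinearExtension f) := ⟨fun x => ⟨x.base⁻¹, x.fiber⁻¹ * f x.base x.base⟩⟩

@[simp] lemma base_mul (x y : BilinearExtension f) : (x * y).base = x.base * y.base := rfl

@[simp] lemma fiber_mul (x y : BilinearExtension f) :
    (x * y).fiber = x.fiber * y.fiber * f x.base y.base := rfl

@[simp] lemma base_one : (1 : BilinearExtension f).base = 1 := rfl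

@[simp] lemma fiber_one : (1 : BilinearExtension f).fiber = 1 := rfl

@[simp] lemma base_inv (x : BilinearExtension f) : x⁻¹.base = x.base⁻¹ := rfl

@[simp] lemma fiber_inv (x : BilinearExtension f) :
    x⁻¹.fiber = x.fiber⁻¹ * f x.base x.base := rfl

instance : Group (BilinearExtension f) :=
  Group.ofLeftAxioms
    (fun x y z => by
      ext
      · simp only [base_mul, mul_assoc]
      · simp only [fiber_mul, base_mul, map_mul, MonoidHom.mul_apply, mul_comm, mul_left_comm,
          mul_assoc])
    (fun x => by ext <;> simp)
    (fun x => by ext <;> simp)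

lemma commutatorElement_eq (x y : BilinearExtension f) :
    ⁅x, y⁆ = ⟨1, f x.base y.base / f y.base x.base⟩ := by
  rw [commutatorElement_def, mul_assoc, ← mul_inv_rev, mul_inv_eq_iff_eq_mul]
  ext
  · simp [mul_comm]
  · simp [mul_comm, mul_left_comm]

/-- The projection of the extension onto its quotient `G`. -/
def baseHom : BilinearExtension f →* G where
  toFun := base
  map_one' := rfl
  map_mul' _ _ := rfl

/-- The inclusion of the central subgroup `B` into the extension. -/
def fiberHom : B →* BilinearExtension f where
  toFun b := ⟨1, b⟩
  map_one' := rfl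
  map_mul' b c := by ext <;> simp

lemma fiberHom_injective : Function.Injective (fiberHom f) :=
  fun _ _ h => congrArg fiber h

/-- The homomorphism lifting the canonical presentation of `G` to the extension. -/
def liftPresentation : FreeGroup G →* BilinearExtension f := FreeGroup.lift fun x => ⟨x, 1⟩

@[simp] lemma liftPresentation_of (x : G) :
    liftPresentation f (FreeGroup.of x) = ⟨x, 1⟩ := FreeGroup.lift_apply_of

lemma base_liftPresentation (w : FreeGroup G) :
    (liftPresentation f w).base = presentation G w := by
  have hcomp : (baseHom f).comp (liftPresentation f) = presentation G := by
    ext x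
    simp [presentation, baseHom]
  exact DFunLike.congr_fun hcomp w

lemma relatorCommutator_le_ker_liftPresentation :
    relatorCommutator G ≤ (liftPresentation f).ker := by
  refine Subgroup.commutator_le.2 fun x _ r hr => ?_
  have hbase : (liftPresentation f r).base = 1 :=
    (base_liftPresentation f r).trans (MonoidHom.mem_ker.1 hr)
  rw [MonoidHom.mem_ker, map_commutatorElement, commutatorElement_eq, hbase]
  ext <;> simp

lemma range_fiberHom_le_map_commutator
    (hf : Subgroup.closure (Set.range fun x : G × G => f x.1 x.2 / f x.2 x.1) = ⊤) :
    (fiberHom f).range ≤ (commutator (FreeGroup G)).map (liftPresentation f) := by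
  rw [MonoidHom.range_eq_map, ← hf, Subgroup.map_le_iff_le_comap, Subgroup.closure_le]
  rintro _ ⟨⟨x, y⟩, rfl⟩
  refine ⟨⁅FreeGroup.of x, FreeGroup.of y⁆,
    Subgroup.commutator_mem_commutator (Subgroup.mem_top _) (Subgroup.mem_top _), ?_⟩
  rw [map_commutatorElement, commutatorElement_eq, liftPresentation_of, liftPresentation_of]
  rfl

end BilinearExtension

section SchurMultiplierCard

lemma freeCentralExtensionMk_surjective (G : Type*) [Group G] :
    Function.Surjective (freeCentralExtensionMk G) :=
  QuotientGroup.mk'_surjective _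

lemma map_commutator_freeCentralExtensionMk (G : Type*) [Group G] :
    (commutator (FreeGroup G)).map (freeCentralExtensionMk G) =
      commutator (FreeGroup G ⧸ relatorCommutator G) := by
  rw [commutator_def, Subgroup.map_commutator,
    Subgroup.map_top_of_surjective _ (freeCentralExtensionMk_surjective G), commutator_def]

lemma map_ker_presentation_le_center (G : Type*) [Group G] :
    (presentation G).ker.map (freeCentralExtensionMk G) ≤
      Subgroup.center (FreeGroup G ⧸ relatorCommutator G) := by
  rw [← Subgroup.commutator_top_left_eq_bot_iff_le_center,
    ← Subgroup.map_top_of_surjective _ (freeCentralExtensionMk_surjective G),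
    ← Subgroup.map_commutator]
  exact (Subgroup.map_eq_bot_iff _).2 (QuotientGroup.ker_mk' (relatorCommutator G)).ge

lemma closure_range_of_sup_ker_presentation_eq_top {G ι : Type*} [Group G] {g : ι → G}
    (hg : Subgroup.closure (Set.range g) = ⊤) :
    Subgroup.closure (Set.range fun i => FreeGroup.of (g i)) ⊔ (presentation G).ker = ⊤ := by
  have hcomp : presentation G ∘ (fun i => FreeGroup.of (g i)) = g := by
    ext i
    simp [presentation]
  rw [← Subgroup.comap_map_eq, MonoidHom.map_closure, ← Set.range_comp, hcomp, hg,
    Subgroup.comap_top]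

lemma closure_range_freeCentralExtensionMk_sup_center_eq_top {G ι : Type*} [Group G] {g : ι → G}
    (hg : Subgroup.closure (Set.range g) = ⊤) :
    Subgroup.closure (Set.range fun i => freeCentralExtensionMk G (FreeGroup.of (g i))) ⊔
      Subgroup.center (FreeGroup G ⧸ relatorCommutator G) = ⊤ := by
  have hmap := congrArg (Subgroup.map (freeCentralExtensionMk G))
    (closure_range_of_sup_ker_presentation_eq_top hg)
  rw [Subgroup.map_sup, MonoidHom.map_closure, ← Set.range_comp,
    Subgroup.map_top_of_surjective _ (freeCentralExtensionMk_surjective G)] at hmap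
  exact top_unique (hmap.ge.trans (sup_le_sup_left (map_ker_presentation_le_center G) _))

variable {G : Type*} [CommGroup G]

lemma commutator_freeGroup_le_ker_presentation :
    commutator (FreeGroup G) ≤ (presentation G).ker :=
  Abelianization.commutator_subset_ker _

lemma card_schurMultiplier_eq_relIndex :
    Nat.card (SchurMultiplier G) = (relatorCommutator G).relIndex (commutator (FreeGroup G)) := by
  rw [← inf_eq_right.2 (commutator_freeGroup_le_ker_presentation (G := G))]
  rfl

lemma card_schurMultiplier_eq_card_commutator :
    Nat.card (SchurMultiplier G) = Nat.card (commutator (FreeGroup G ⧸ relatorCommutator G)) := by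
  rw [← map_commutator_freeCentralExtensionMk, ← Subgroup.relIndex_ker, freeCentralExtensionMk,
    QuotientGroup.ker_mk', card_schurMultiplier_eq_relIndex]

lemma card_dvd_card_schurMultiplier {B : Type*} [CommGroup B] (f : G →* G →* B)
    (hf : Subgroup.closure (Set.range fun x : G × G => f x.1 x.2 / f x.2 x.1) = ⊤) :
    Nat.card B ∣ Nat.card (SchurMultiplier G) := by
  open BilinearExtension in
  calc Nat.card B
      = Nat.card (fiberHom f).range :=
        Nat.card_congr (MonoidHom.ofInjective (fiberHom_injective f)).toEquiv
    _ ∣ Nat.card ((commutator (FreeGroup G)).map (liftPresentation f)) :=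
        Subgroup.card_dvd_of_le (range_fiberHom_le_map_commutator f hf)
    _ = (liftPresentation f).ker.relIndex (commutator (FreeGroup G)) :=
        (Subgroup.relIndex_ker _ _).symm
    _ ∣ (relatorCommutator G).relIndex (commutator (FreeGroup G)) :=
        Subgroup.relIndex_dvd_of_le_left _ (relatorCommutator_le_ker_liftPresentation f)
    _ = Nat.card (SchurMultiplier G) := card_schurMultiplier_eq_relIndex.symm

lemma card_schurMultiplier_dvd_prod_gcd {ι : Type*} [Fintype ι] [LinearOrder ι] {g : ι → G}
    (hg : Subgroup.closure (Set.range g) = ⊤) {m : ι → ℕ} (hm : ∀ i, g i ^ m i = 1) :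
    Nat.card (SchurMultiplier G) ∣ ∏ q : LTPair ι, Nat.gcd (m q.1.1) (m q.1.2) := by
  rw [card_schurMultiplier_eq_card_commutator]
  refine card_commutator_dvd_prod_gcd ?_
    (closure_range_freeCentralExtensionMk_sup_center_eq_top hg) fun i => ?_
  · rw [← map_commutator_freeCentralExtensionMk]
    exact (Subgroup.map_mono commutator_freeGroup_le_ker_presentation).trans
      (map_ker_presentation_le_center G)
  · refine map_ker_presentation_le_center G ⟨FreeGroup.of (g i) ^ m i, ?_, map_pow _ _ _⟩
    simp [MonoidHom.mem_ker, presentation, hm]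

end SchurMultiplierCard

section ProductsOfCyclicGroups

variable {ι : Type*}

lemma closure_range_mulSingle_ofAdd_one_eq_top [Finite ι] [DecidableEq ι] (m : ι → ℕ) :
    Subgroup.closure (Set.range fun i =>
      (Pi.mulSingle i (Multiplicative.ofAdd 1) : ∀ i, Multiplicative (ZMod (m i)))) = ⊤ := by
  cases nonempty_fintype ι
  refine top_unique fun x _ => ?_
  rw [← Finset.univ_prod_mulSingle x]
  refine Subgroup.prod_mem _ fun i _ => ?_
  have hzpow : x i = Multiplicative.ofAdd (1 : ZMod (m i)) ^ ((x i).toAdd.cast : ℤ) := by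
    rw [← ofAdd_zsmul, zsmul_one, ZMod.intCast_zmod_cast, ofAdd_toAdd]
  rw [hzpow, Pi.mulSingle_zpow]
  exact zpow_mem (Subgroup.subset_closure (Set.mem_range_self i)) _

variable [LinearOrder ι]

/-- The bilinear map whose component at `i < j` multiplies the `i`-th coordinate of the first
argument by the `j`-th coordinate of the second, modulo `gcd (m i) (m j)`. -/
def zmodPairing (m : ι → ℕ) :
    (∀ i, Multiplicative (ZMod (m i))) →* (∀ i, Multiplicative (ZMod (m i))) →*
      ∀ q : LTPair ι, Multiplicative (ZMod (Nat.gcd (m q.1.1) (m q.1.2))) :=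
  MonoidHom.mk' (fun x => MonoidHom.mk' (fun y q => Multiplicative.ofAdd
      (ZMod.castHom (Nat.gcd_dvd_left (m q.1.1) (m q.1.2)) _ (x q.1.1).toAdd *
        ZMod.castHom (Nat.gcd_dvd_right (m q.1.1) (m q.1.2)) _ (y q.1.2).toAdd))
      fun y z => by ext q; simp [-ZMod.castHom_apply, mul_add])
    fun x y => by ext z q; simp [-ZMod.castHom_apply, add_mul]

lemma toAdd_zmodPairing_mulSingle (m : ι → ℕ) (i j : ι) (q : LTPair ι) :
    (zmodPairing m (Pi.mulSingle i (Multiplicative.ofAdd 1))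
        (Pi.mulSingle j (Multiplicative.ofAdd 1)) q).toAdd =
      if q.1 = (i, j) then 1 else 0 := by
  have castHom_single (i j : ι) {d : ℕ} (hd : d ∣ m j) :
      ZMod.castHom hd (ZMod d) ((Pi.mulSingle i (Multiplicative.ofAdd 1) :
        ∀ i, Multiplicative (ZMod (m i))) j).toAdd = if j = i then 1 else 0 := by
    split_ifs with hij
    · subst hij
      rw [Pi.mulSingle_eq_same, toAdd_ofAdd, map_one]
    · rw [Pi.mulSingle_eq_of_ne hij, toAdd_one, map_zero]
  refine (congrArg₂ HMul.hMul (castHom_single i q.1.1 (Nat.gcd_dvd_left _ _))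
    (castHom_single j q.1.2 (Nat.gcd_dvd_right _ _))).trans ?_
  simp only [ite_zero_mul_ite_zero, mul_one, Prod.ext_iff]

lemma zmodPairing_mulSingle_div (m : ι → ℕ) (q : LTPair ι) :
    zmodPairing m (Pi.mulSingle q.1.1 (Multiplicative.ofAdd 1))
          (Pi.mulSingle q.1.2 (Multiplicative.ofAdd 1)) /
        zmodPairing m (Pi.mulSingle q.1.2 (Multiplicative.ofAdd 1))
          (Pi.mulSingle q.1.1 (Multiplicative.ofAdd 1)) =
      Pi.mulSingle q (Multiplicative.ofAdd 1) := by
  ext r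
  have hswap : r.1 ≠ (q.1.2, q.1.1) := fun h => q.2.asymm (by simpa [h] using r.2)
  rw [Pi.div_apply, toAdd_div, toAdd_zmodPairing_mulSingle, toAdd_zmodPairing_mulSingle,
    if_neg hswap, sub_zero]
  split_ifs with hr
  · obtain rfl : r = q := Subtype.ext hr
    rw [Pi.mulSingle_eq_same, toAdd_ofAdd]
  · rw [Pi.mulSingle_eq_of_ne fun h => hr (congrArg Subtype.val h), toAdd_one]

theorem card_schurMultiplier_eq_prod_gcd [Fintype ι] {G : Type*} [CommGroup G] (m : ι → ℕ)
    (φ : G ≃* ∀ i, Multiplicative (ZMod (m i))) :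
    Nat.card (SchurMultiplier G) = ∏ q : LTPair ι, Nat.gcd (m q.1.1) (m q.1.2) := by
  let g (i : ι) : G := φ.symm (Pi.mulSingle i (Multiplicative.ofAdd 1))
  refine Nat.dvd_antisymm (card_schurMultiplier_dvd_prod_gcd (g := g) ?_ fun i => ?_) ?_
  · have hrange : Set.range g = φ.symm.toMonoidHom '' _ := Set.range_comp φ.symm _
    rw [hrange, ← MonoidHom.map_closure, closure_range_mulSingle_ofAdd_one_eq_top m]
    exact Subgroup.map_top_of_surjective _ φ.symm.surjective
  · rw [← map_pow, ← Pi.mulSingle_pow, ← ofAdd_nsmul]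
    simp
  · have hdvd := card_dvd_card_schurMultiplier
      (((zmodPairing m).comp φ.toMonoidHom).compl₂ φ.toMonoidHom) ?_
    · simpa only [Nat.card_pi, Nat.card_congr Multiplicative.toAdd, Nat.card_zmod] using hdvd
    refine top_unique ((closure_range_mulSingle_ofAdd_one_eq_top _).ge.trans
      (Subgroup.closure_mono ?_))
    rintro _ ⟨q, rfl⟩
    refine ⟨(g q.1.1, g q.1.2), ?_⟩
    simpa [g] using zmodPairing_mulSingle_div m q

end ProductsOfCyclicGroups

section Exponents

variable {ι : Type*} [Fintype ι]

/-- Twice the number `t` for which the Schur multiplier of `∏ i, ℤ/p^(e i)`, a group of order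
`p ^ n`, has order `p ^ (n * (n - 1) / 2 - t)`; see `doubleDefect_eq_two_mul`. The subtraction does
not truncate as long as all exponents are positive. -/
def doubleDefect (e : ι → ℕ) : ℕ := ∑ i, ∑ j, (e i * e j - min (e i) (e j))

lemma sum_sum_eq_two_mul_sum_ltPair_add [LinearOrder ι] {F : ι → ι → ℕ}
    (hF : ∀ i j, F i j = F j i) :
    ∑ i, ∑ j, F i j = 2 * ∑ q : LTPair ι, F q.1.1 q.1.2 + ∑ i, F i i := by
  have hlt : ∑ q : LTPair ι, F q.1.1 q.1.2 = ∑ i, ∑ j, if i < j then F i j else 0 := by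
    rw [← Finset.sum_product', Finset.univ_product_univ, ← Finset.sum_filter]
    exact (Finset.sum_subtype _ (by simp) fun q : ι × ι => F q.1 q.2).symm
  have hgt : ∑ q : LTPair ι, F q.1.1 q.1.2 = ∑ i, ∑ j, if j < i then F i j else 0 := by
    rw [hlt, Finset.sum_comm]
    simp only [hF]
  have hdiag : ∑ i, F i i = ∑ i, ∑ j, if i = j then F i j else 0 := by
    simp only [Finset.sum_ite_eq, Finset.mem_univ, if_true]
  rw [two_mul, hdiag]
  nth_rw 1 [hlt]
  rw [hgt]
  simp only [← Finset.sum_add_distrib]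
  refine Finset.sum_congr rfl fun i _ => Finset.sum_congr rfl fun j _ => ?_
  rcases lt_trichotomy i j with hij | rfl | hij
  · simp [hij, hij.not_gt, hij.ne]
  · simp
  · simp [hij, hij.not_gt, hij.ne']

lemma doubleDefect_add_sum_min (e : ι → ℕ) (he : ∀ i, 0 < e i) :
    doubleDefect e + ∑ i, ∑ j, min (e i) (e j) = (∑ i, e i) * ∑ i, e i := by
  simp only [doubleDefect, Finset.sum_mul_sum, ← Finset.sum_add_distrib]
  refine Finset.sum_congr rfl fun i _ => Finset.sum_congr rfl fun j _ => Nat.sub_add_cancel ?_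
  exact (min_le_left _ _).trans (Nat.le_mul_of_pos_right _ (he j))

lemma doubleDefect_eq_two_mul [LinearOrder ι] (e : ι → ℕ) (he : ∀ i, 0 < e i) {n t : ℕ}
    (hn : ∑ i, e i = n)
    (ht : ∑ q : LTPair ι, min (e q.1.1) (e q.1.2) + t = n * (n - 1) / 2) :
    doubleDefect e = 2 * t := by
  have hsum := doubleDefect_add_sum_min e he
  have hmin := sum_sum_eq_two_mul_sum_ltPair_add fun i j => min_comm (e i) (e j)
  have hchoose : 2 * (n * (n - 1) / 2) + n = n * n := by
    rw [Nat.mul_div_cancel' (Nat.even_mul_pred_self n).two_dvd, Nat.mul_sub_one,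
      Nat.sub_add_cancel (Nat.le_mul_self n)]
  simp only [min_self, hn] at hsum hmin
  lia

lemma sum_sum_le_doubleDefect (e : ι → ℕ) (s : Finset ι) :
    ∑ i ∈ s, ∑ j ∈ s, (e i * e j - min (e i) (e j)) ≤ doubleDefect e :=
  (Finset.sum_le_sum fun _ _ => Finset.sum_le_sum_of_subset s.subset_univ).trans
    (Finset.sum_le_sum_of_subset s.subset_univ)

lemma doubleDefect_of_forall_ne_eq_one {e : ι → ℕ} {i₀ : ι}
    (he : ∀ j ≠ i₀, e j = 1) :
    doubleDefect e = (e i₀ - 1) * (e i₀ + 2 * (Fintype.card ι - 1)) := by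
  classical
  have sum_row (f : ι → ℕ) (a : ℕ) (hf : ∀ j ≠ i₀, f j = a) :
      ∑ j, f j = f i₀ + (Fintype.card ι - 1) * a := by
    rw [← Finset.add_sum_erase _ _ (Finset.mem_univ i₀),
      Finset.sum_congr rfl fun j hj => hf j (Finset.ne_of_mem_erase hj)]
    simp
  have sum_row_ne (k : ι) (hk : k ≠ i₀) : ∑ j, (e k * e j - min (e k) (e j)) = e i₀ - 1 := by
    rw [sum_row _ 0 fun j hj => by simp [he k hk, he j hj], he k hk]
    lia
  rw [doubleDefect, sum_row _ _ sum_row_ne,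
    sum_row _ (e i₀ - 1) fun j hj => by rw [he j hj]; lia, min_self, ← Nat.mul_sub_one]
  ring

lemma eq_two_and_card_eq_four_of_doubleDefect_eq_eight {e : ι → ℕ} {i₀ : ι}
    (hi₀ : 2 ≤ e i₀) (he : ∀ j ≠ i₀, e j = 1) (h8 : doubleDefect e = 8) :
    e i₀ = 2 ∧ Fintype.card ι = 4 := by
  rw [doubleDefect_of_forall_ne_eq_one he] at h8
  have hle : e i₀ ≤ 3 := by
    by_contra! hlt
    nlinarith [Nat.mul_le_mul (show 3 ≤ e i₀ - 1 by lia)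
      (show 4 ≤ e i₀ + 2 * (Fintype.card ι - 1) by lia)]
  interval_cases e i₀ <;> lia

lemma one_le_mul_sub_min {a b : ℕ} (ha : 2 ≤ a) (hb : 1 ≤ b) : 1 ≤ a * b - min a b := by
  have := Nat.mul_le_mul_right b ha
  lia

lemma two_le_mul_sub_min {a b : ℕ} (ha : 2 ≤ a) (hb : 2 ≤ b) : 2 ≤ a * b - min a b := by
  have := Nat.mul_le_mul_left a hb
  lia

lemma eq_two_of_mul_self_sub_le_two {a : ℕ} (ha : 2 ≤ a) (h : a * a - a ≤ 2) : a = 2 := by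
  by_contra hne
  have := Nat.mul_le_mul_right a (show 3 ≤ a by lia)
  lia

lemma card_eq_two_and_eq_two_of_doubleDefect_eq_eight {e : ι → ℕ}
    (he : ∀ i, 0 < e i) {i j : ι} (hij : i ≠ j) (hi : 2 ≤ e i) (hj : 2 ≤ e j)
    (h8 : doubleDefect e = 8) :
    Fintype.card ι = 2 ∧ ∀ l, e l = 2 := by
  classical
  have hii := two_le_mul_sub_min hi hi
  have hjj := two_le_mul_sub_min hj hj
  have hij₂ := two_le_mul_sub_min hi hj
  have hji₂ := two_le_mul_sub_min hj hi
  have eq_or_eq (l : ι) : l = i ∨ l = j := by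
    by_contra! hl
    have hsum := h8 ▸ sum_sum_le_doubleDefect e {i, j, l}
    have hil := one_le_mul_sub_min hi (he l)
    have hjl := one_le_mul_sub_min hj (he l)
    simp only [Finset.sum_insert, Finset.mem_insert, Finset.mem_singleton, hij, hl.1.symm,
      hl.2.symm, or_self, not_false_eq_true, Finset.sum_singleton] at hsum
    lia
  have huniv : (Finset.univ : Finset ι) = {i, j} := by
    ext l
    simpa using eq_or_eq l
  rw [doubleDefect, huniv, Finset.sum_pair hij, Finset.sum_pair hij, Finset.sum_pair hij] at h8
  rw [min_self] at h8 hii hjj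
  refine ⟨by rw [← Finset.card_univ, huniv, Finset.card_pair hij], fun l => ?_⟩
  rcases eq_or_eq l with rfl | rfl
  · exact eq_two_of_mul_self_sub_le_two hi (by lia)
  · exact eq_two_of_mul_self_sub_le_two hj (by lia)

theorem exponents_of_doubleDefect_eq_eight {e : ι → ℕ} (he : ∀ i, 0 < e i)
    (h8 : doubleDefect e = 8) :
    (Fintype.card ι = 2 ∧ ∀ i, e i = 2) ∨
      (Fintype.card ι = 4 ∧ ∃ i₀, e i₀ = 2 ∧ ∀ j ≠ i₀, e j = 1) := by
  obtain ⟨i, hi⟩ : ∃ i, e i ≠ 1 := by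
    by_contra! hone
    simp [doubleDefect, hone] at h8
  have two_le (j : ι) (hj : e j ≠ 1) : 2 ≤ e j := by
    have := he j
    lia
  by_cases hrest : ∀ j ≠ i, e j = 1
  · obtain ⟨hei, hcard⟩ := eq_two_and_card_eq_four_of_doubleDefect_eq_eight (two_le i hi) hrest h8
    exact .inr ⟨hcard, i, hei, hrest⟩
  · push Not at hrest
    obtain ⟨j, hji, hj⟩ := hrest
    exact .inl (card_eq_two_and_eq_two_of_doubleDefect_eq_eight he hji.symm (two_le i hi)
      (two_le j hj) h8)

end Exponents

section AbelianPGroups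

lemma gcd_pow_pow_same (p a b : ℕ) : Nat.gcd (p ^ a) (p ^ b) = p ^ min a b := by
  rcases le_total a b with hab | hba
  · rw [min_eq_left hab, Nat.gcd_eq_left (pow_dvd_pow p hab)]
  · rw [min_eq_right hba, Nat.gcd_eq_right (pow_dvd_pow p hba)]

variable {G : Type*} [CommGroup G] {p n : ℕ}

lemma exists_exponents_of_prod_eq_prime_pow {ι : Type*} [Fintype ι] (hp : p.Prime) {m : ι → ℕ}
    (hm : ∏ i, m i = p ^ n) : ∃ e : ι → ℕ, ∑ i, e i = n ∧ m = fun i => p ^ e i := by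
  have exists_exponent (i : ι) : ∃ a, m i = p ^ a := by
    obtain ⟨a, -, ha⟩ :=
      (Nat.dvd_prime_pow hp).1 (hm ▸ Finset.dvd_prod_of_mem m (Finset.mem_univ i))
    exact ⟨a, ha⟩
  choose e he using exists_exponent
  refine ⟨e, Nat.pow_right_injective hp.two_le ?_, funext he⟩
  simpa only [he, Finset.prod_pow_eq_pow_sum] using hm

theorem exists_mulEquiv_pi_zmod_prime_pow (hp : p.Prime) (hG : Nat.card G = p ^ n) :
    ∃ (k : ℕ) (e : Fin k → ℕ), (∀ i, 0 < e i) ∧ ∑ i, e i = n ∧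
      Nonempty (G ≃* ∀ i, Multiplicative (ZMod (p ^ e i))) := by
  have : Finite G := Nat.finite_of_card_ne_zero (hG ▸ pow_ne_zero n hp.ne_zero)
  obtain ⟨ι, _, m, hm, ⟨φ⟩⟩ := CommGroup.equiv_prod_multiplicative_zmod_of_finite G
  have hprod : ∏ i, m i = p ^ n := by
    simpa only [Nat.card_pi, Nat.card_congr Multiplicative.toAdd, Nat.card_zmod, hG] using
      (Nat.card_congr φ.toEquiv).symm
  obtain ⟨e, hsum, rfl⟩ := exists_exponents_of_prod_eq_prime_pow hp hprod
  have he (i : ι) : 0 < e i := Nat.pos_of_ne_zero fun h0 => (hm i).ne' (by simp [h0])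
  let σ : Fin (Fintype.card ι) ≃ ι := (Fintype.equivFin ι).symm
  let reindex : (∀ i, Multiplicative (ZMod (p ^ e i))) ≃*
      ∀ i, Multiplicative (ZMod (p ^ e (σ i))) :=
    { (Equiv.piCongrLeft _ σ).symm with map_mul' := fun _ _ => rfl }
  exact ⟨_, e ∘ σ, fun i => he (σ i), (Equiv.sum_comp σ e).trans hsum, ⟨φ.trans reindex⟩⟩

lemma doubleDefect_eq_of_card_schurMultiplier {ι : Type*} [Fintype ι] [LinearOrder ι] {e : ι → ℕ}
    {t : ℕ} (hp : 1 < p) (he : ∀ i, 0 < e i) (hn : ∑ i, e i = n)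
    (φ : G ≃* ∀ i, Multiplicative (ZMod (p ^ e i)))
    (hM : Nat.card (SchurMultiplier G) * p ^ t = p ^ (n * (n - 1) / 2)) :
    doubleDefect e = 2 * t := by
  refine doubleDefect_eq_two_mul e he hn (Nat.pow_right_injective hp ?_)
  simpa only [card_schurMultiplier_eq_prod_gcd _ φ, gcd_pow_pow_same,
    Finset.prod_pow_eq_pow_sum, ← pow_add] using hM

lemma nonempty_pi_zmod_mulEquiv_prod {k a b : ℕ} {m : Fin (k + 1) → ℕ} (i₀ : Fin (k + 1))
    (ha : m i₀ = a) (hb : ∀ j ≠ i₀, m j = b) :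
    Nonempty ((∀ i, Multiplicative (ZMod (m i))) ≃*
      Multiplicative (ZMod a) × (Fin k → Multiplicative (ZMod b))) := by
  let zmodCongr {c d : ℕ} (h : c = d) : Multiplicative (ZMod c) ≃* Multiplicative (ZMod d) :=
    (ZMod.ringEquivCongr h).toAddEquiv.toMultiplicative
  let split : (∀ i, Multiplicative (ZMod (m i))) ≃*
      Multiplicative (ZMod (m i₀)) × ∀ j, Multiplicative (ZMod (m (i₀.succAbove j))) :=
    { (Fin.insertNthEquiv (fun i => Multiplicative (ZMod (m i))) i₀).symm with
      map_mul' := fun _ _ => rfl }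
  exact ⟨split.trans (MulEquiv.prodCongr (zmodCongr ha)
    (MulEquiv.piCongrRight fun j => zmodCongr (hb _ (Fin.succAbove_ne i₀ j))))⟩

end AbelianPGroups

theorem abelian_classification_t_four (p n : ℕ) (hp : p.Prime)
    (G : Type*) [CommGroup G] [Finite G] (hG : Nat.card G = p ^ n)
    (hM : Nat.card (SchurMultiplier G) * p ^ 4 = p ^ (n * (n - 1) / 2)) :
    Nonempty (G ≃* Multiplicative (ZMod (p ^ 2)) × Multiplicative (ZMod (p ^ 2))) ∨
      Nonempty (G ≃* Multiplicative (ZMod (p ^ 2)) × (Fin 3 → Multiplicative (ZMod p))) := by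
  obtain ⟨k, e, he, hn, ⟨φ⟩⟩ := exists_mulEquiv_pi_zmod_prime_pow hp hG
  have h8 : doubleDefect e = 8 := doubleDefect_eq_of_card_schurMultiplier hp.one_lt he hn φ hM
  rcases exponents_of_doubleDefect_eq_eight he h8 with ⟨hk, htwo⟩ | ⟨hk, i₀, hi₀, hone⟩
  · left
    obtain rfl : k = 2 := by simpa using hk
    obtain ⟨ψ⟩ := nonempty_pi_zmod_mulEquiv_prod (m := fun i => p ^ e i) (b := p ^ 2) 0
      (congrArg (p ^ ·) (htwo 0)) fun j _ => congrArg (p ^ ·) (htwo j)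
    exact ⟨(φ.trans ψ).trans (MulEquiv.prodCongr (MulEquiv.refl _) (MulEquiv.piUnique _))⟩
  · right
    obtain rfl : k = 4 := by simpa using hk
    obtain ⟨ψ⟩ := nonempty_pi_zmod_mulEquiv_prod (m := fun i => p ^ e i) (b := p) i₀
      (congrArg (p ^ ·) hi₀) fun j hj => by rw [hone j hj, pow_one]
    exact ⟨φ.trans ψ⟩
end

section
/- Let p be a prime, G a finite p-group, and N a normal subgroup of G of order pⁿ admitting a complement K (so G = NK and N ∩ K = 1) with |K| = p^m. Assuming M(G) ≅ M(G,N) × M(K) (Ellis's splitting) and Schur's product formula when K is normal (so G ≅ N × K), the order of M(G,N) equals |M(N)| · |N^ab ⊗ K^ab|, and hence divides p^{n(2m+n−1)/2}. -/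
/-!
Hopf's formula places `M(G)` inside the centre of `E = F / [F, R]`. Commutators in a central
extension depend only on the images of their entries, which gives Schur's product formula
`M(A × B) ≅ M(A) × M(B) × (A^ab ⊗ B^ab)`: the tensor factor is generated by the commutators of
lifts of `A` with lifts of `B`, and it embeds because `E` maps to the Heisenberg group of the
pairing `⊗`. Cancelling `M(K)` against Ellis's splitting leaves `|M(N)| |N^ab ⊗ K^ab|`.

For Green's bound, `M(N)` lies in the derived subgroup of `E`, whose order Wiegold's theorem bounds
in terms of the index of the centre. The tensor product is a quotient of `K^d` when `d` elements
generate `N`.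
-/

open Subgroup
open scoped commutatorElement TensorProduct

/-! ### Subgroups of prime-power index -/

section PrimePowerIndex

variable {p n : ℕ} {X : Type*} [Group X]

theorem dvd_prime_pow_of_mul_dvd_prime_pow_succ {r a : ℕ} (hp : p.Prime) (hr : r ≠ 1)
    (h : r * a ∣ p ^ (n + 1)) : a ∣ p ^ n := by
  obtain ⟨i, -, rfl⟩ := (Nat.dvd_prime_pow hp).1 (dvd_of_mul_right_dvd h)
  have hpr : p ∣ p ^ i := dvd_pow_self p (by rintro rfl; exact hr (pow_zero p))
  have hpa : p * a ∣ p * p ^ n := pow_succ' p n ▸ (mul_dvd_mul_right hpr a).trans h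
  exact Nat.dvd_of_mul_dvd_mul_left hp.pos hpa

theorem index_dvd_prime_pow_of_lt (hp : p.Prime) {H K : Subgroup X} (hlt : H < K)
    (hH : H.index ∣ p ^ (n + 1)) : K.index ∣ p ^ n := by
  rw [← relIndex_mul_index hlt.le] at hH
  exact dvd_prime_pow_of_mul_dvd_prime_pow_succ hp
    (fun h => hlt.not_ge (relIndex_eq_one.1 h)) hH

theorem exists_finset_card_le_sup_closure_eq_top (hp : p.Prime) :
    ∀ {n : ℕ} {H : Subgroup X}, H.index ∣ p ^ n →
      ∃ S : Finset X, S.card ≤ n ∧ H ⊔ closure (S : Set X) = ⊤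
  | 0, H, hH => ⟨∅, by simp, by simpa using hH⟩
  | n + 1, H, hH => by
    classical
    by_cases htop : H = ⊤
    · exact ⟨∅, by simp, by simp [htop]⟩
    obtain ⟨x, -, hx⟩ := SetLike.exists_of_lt (lt_top_iff_ne_top.2 htop)
    have hlt : H < H ⊔ zpowers x :=
      left_lt_sup.2 fun hle => hx (hle (mem_zpowers x))
    obtain ⟨S, hcard, hS⟩ :=
      exists_finset_card_le_sup_closure_eq_top hp (index_dvd_prime_pow_of_lt hp hlt hH)
    refine ⟨insert x S, (Finset.card_insert_le x S).trans (by lia), ?_⟩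
    rw [Finset.coe_insert, Set.insert_eq, Subgroup.closure_union, ← zpowers_eq_closure,
      ← sup_assoc, hS]

theorem rank_le_of_card_dvd_prime_pow [Group.FG X] (hp : p.Prime) (hX : Nat.card X ∣ p ^ n) :
    Group.rank X ≤ n := by
  obtain ⟨S, hcard, hS⟩ := exists_finset_card_le_sup_closure_eq_top hp (index_bot (G := X) ▸ hX)
  exact (Group.rank_le (bot_sup_eq (closure (S : Set X)) ▸ hS)).trans hcard

end PrimePowerIndex

/-! ### Commutators in central extensions -/

section CentralCommutators

variable {X Q : Type*} [Group X] [Group Q] {x y z : X}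

theorem commutatorElement_mul_left_of_mem_center (h : ⁅y, z⁆ ∈ center X) :
    ⁅x * y, z⁆ = ⁅x, z⁆ * ⁅y, z⁆ := by
  rw [commutatorElement_mul_left_eq_conj_mul, mem_center_iff.1 h x, mul_inv_cancel_right,
    mem_center_iff.1 h]

theorem commutatorElement_mul_right_of_mem_center (h : ⁅x, z⁆ ∈ center X) :
    ⁅x, y * z⁆ = ⁅x, y⁆ * ⁅x, z⁆ := by
  rw [commutatorElement_mul_right_eq_mul_conj, mul_assoc ⁅x, y⁆, mem_center_iff.1 h y,
    ← mul_assoc, mul_inv_cancel_right]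

theorem commutatorElement_eq_one_of_right_mem_center (h : y ∈ center X) : ⁅x, y⁆ = 1 :=
  commutatorElement_eq_one_iff_mul_comm.2 (mem_center_iff.1 h x)

theorem commutatorElement_eq_one_of_left_mem_center (h : x ∈ center X) : ⁅x, y⁆ = 1 :=
  commutatorElement_eq_one_iff_mul_comm.2 (mem_center_iff.1 h y).symm

theorem commutatorElement_eq_of_map_eq {f : X →* Q} (hf : f.ker ≤ center X) {x' y' : X}
    (hx : f x = f x') (hy : f y = f y') : ⁅x, y⁆ = ⁅x', y'⁆ := by
  have center_of_map_eq {a b : X} (h : f a = f b) : a⁻¹ * b ∈ center X :=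
    hf (by rw [MonoidHom.mem_ker, map_mul, map_inv, h, inv_mul_cancel])
  have hleft := commutatorElement_eq_one_of_left_mem_center (y := y') (center_of_map_eq hx)
  have hright := commutatorElement_eq_one_of_right_mem_center (x := x) (center_of_map_eq hy)
  rw [← mul_inv_cancel_left x x', commutatorElement_mul_left_of_mem_center (by simp [hleft]),
    hleft, mul_one, ← mul_inv_cancel_left y y',
    commutatorElement_mul_right_of_mem_center (by simp [hright]), hright, mul_one]

theorem eqOn_commutator_of_comp_eq {Y : Type*} [Group Y] {f : X →* Q} (hf : f.ker ≤ center X)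
    {φ ψ : Y →* X} (h : f.comp φ = f.comp ψ) : Set.EqOn φ ψ (commutator Y) := by
  suffices hle : commutator Y ≤ φ.eqLocus ψ from fun y hy => hle hy
  refine commutator_le.2 fun a _ b _ => ?_
  change φ ⁅a, b⁆ = ψ ⁅a, b⁆
  rw [map_commutatorElement, map_commutatorElement]
  exact commutatorElement_eq_of_map_eq hf (DFunLike.congr_fun h a) (DFunLike.congr_fun h b)

theorem finite_commutatorSet_of_ker_le_center [Finite Q] {f : X →* Q} (hf : f.ker ≤ center X) :
    Finite (commutatorSet X) := by
  let lift : f.range → X := fun q => q.2.choose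
  have hlift (q : f.range) : f (lift q) = q := q.2.choose_spec
  refine Set.Finite.subset (Set.finite_range fun q : f.range × f.range => ⁅lift q.1, lift q.2⁆) ?_
  rintro _ ⟨x, y, rfl⟩
  exact ⟨(⟨f x, x, rfl⟩, ⟨f y, y, rfl⟩),
    commutatorElement_eq_of_map_eq hf (hlift _) (hlift _)⟩

theorem map_mem_center_of_surjective {f : X →* Q} (hf : Function.Surjective f)
    (hx : x ∈ center X) : f x ∈ center Q := by
  rw [mem_center_iff, hf.forall]
  exact fun g => by rw [← map_mul, ← map_mul, mem_center_iff.1 hx]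

theorem ker_lift_le_center {f : X →* Q} (hf : f.ker ≤ center X) {Z : Subgroup X} [Z.Normal]
    (hZ : Z ≤ f.ker) : (QuotientGroup.lift Z f hZ).ker ≤ center (X ⧸ Z) := by
  rw [QuotientGroup.ker_lift]
  rintro _ ⟨x, hx, rfl⟩
  exact map_mem_center_of_surjective (QuotientGroup.mk'_surjective Z) (hf hx)

theorem normal_of_le_center {H : Subgroup X} (hH : H ≤ center X) : H.Normal :=
  ⟨fun h hh g => by rwa [mem_center_iff.1 (hH hh) g, mul_inv_cancel_right]⟩

theorem map_commutator_of_surjective {f : X →* Q} (hf : Function.Surjective f) :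
    (commutator X).map f = commutator Q := by
  rw [map_commutator_eq, MonoidHom.range_eq_top.2 hf, commutator_def]

end CentralCommutators

/-! ### Wiegold's bound on the derived subgroup -/

section Wiegold

variable {X : Type*} [Group X] {p n : ℕ}

theorem card_dvd_card_ker_mul_card_map {Y : Type*} [Group Y] (f : X →* Y) (H : Subgroup X) :
    Nat.card H ∣ Nat.card f.ker * Nat.card (H.map f) := by
  rw [← relIndex_ker, ← card_mul_index (f.ker.subgroupOf H)]
  exact mul_dvd_mul_right
    (card_comap_dvd_of_injective f.ker H.subtype H.subtype_injective) _

/-- The homomorphism `g ↦ ⁅x, g⁆` attached to an element `x` of the second centre. -/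
def commutatorHom (x : X) (hx : x ∈ (center X).upperCentralSeriesStep) : X →* X :=
  MonoidHom.mk' (fun g => ⁅x, g⁆) fun _ h => commutatorElement_mul_right_of_mem_center (hx h)

theorem exists_mem_upperCentralSeriesStep_notMem_center (hp : p.Prime)
    (hindex : (center X).index ∣ p ^ n) (hcenter : center X ≠ ⊤) :
    ∃ x ∈ (center X).upperCentralSeriesStep, x ∉ center X := by
  have := Fact.mk hp
  obtain ⟨i, -, hi⟩ := (Nat.dvd_prime_pow hp).1 hindex
  have hcard : Nat.card (X ⧸ center X) = p ^ i := hi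
  have : Finite (X ⧸ center X) :=
    Nat.finite_of_card_ne_zero (hcard ▸ pow_ne_zero i hp.ne_zero)
  have : Nontrivial (X ⧸ center X) := QuotientGroup.nontrivial_iff.2 hcenter
  have := (IsPGroup.of_card hcard).center_nontrivial
  obtain ⟨⟨y, hy⟩, hy1⟩ := exists_ne (1 : center (X ⧸ center X))
  obtain ⟨x, rfl⟩ := QuotientGroup.mk'_surjective (center X) y
  refine ⟨x, by rwa [(center X).upperCentralSeriesStep_eq_comap_center], fun hx => hy1 ?_⟩
  exact Subtype.ext ((QuotientGroup.eq_one_iff x).2 hx)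

theorem card_range_commutatorHom_dvd (hp : p.Prime) {x : X}
    (hx : x ∈ (center X).upperCentralSeriesStep) (hxc : x ∉ center X)
    (hindex : (center X).index ∣ p ^ (n + 1)) :
    Nat.card (commutatorHom x hx).range ∣ p ^ n := by
  rw [← index_ker]
  refine index_dvd_prime_pow_of_lt hp (SetLike.lt_iff_le_and_exists.2 ⟨?_, x, ?_, hxc⟩) hindex
  · exact fun z hz => commutatorElement_eq_one_of_right_mem_center hz
  · exact commutatorElement_self x

theorem range_commutatorHom_le_center {x : X} (hx : x ∈ (center X).upperCentralSeriesStep) :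
    (commutatorHom x hx).range ≤ center X := by
  rintro _ ⟨g, rfl⟩
  exact hx g

theorem index_center_quotient_range_commutatorHom_dvd (hp : p.Prime) {x : X}
    (hx : x ∈ (center X).upperCentralSeriesStep) (hxc : x ∉ center X)
    [(commutatorHom x hx).range.Normal] (hindex : (center X).index ∣ p ^ (n + 1)) :
    (center (X ⧸ (commutatorHom x hx).range)).index ∣ p ^ n := by
  have hsurj := QuotientGroup.mk'_surjective (commutatorHom x hx).range
  rw [← index_comap_of_surjective _ hsurj]
  refine index_dvd_prime_pow_of_lt hp (SetLike.lt_iff_le_and_exists.2 ⟨?_, x, ?_, hxc⟩) hindex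
  · exact fun z hz => map_mem_center_of_surjective hsurj hz
  · rw [← (commutatorHom x hx).range.upperCentralSeriesStep_eq_comap_center]
    exact fun g => ⟨g, rfl⟩

-- Induction: pass to the quotient by `⁅x, X⁆` with `x` in the second centre but not central.
theorem card_commutator_dvd_prime_pow (hp : p.Prime) :
    ∀ {n : ℕ} {X : Type*} [Group X], (center X).index ∣ p ^ n →
      Nat.card (commutator X) ∣ p ^ n.choose 2 := by
  intro n
  induction n with
  | zero =>
    intro X _ hindex
    have hcenter : center X = ⊤ := by simpa using hindex
    simp [(commutator_eq_bot_iff_center_eq_top X).2 hcenter]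
  | succ n ih =>
    intro X _ hindex
    by_cases hcenter : center X = ⊤
    · simp [(commutator_eq_bot_iff_center_eq_top X).2 hcenter]
    obtain ⟨x, hx, hxc⟩ := exists_mem_upperCentralSeriesStep_notMem_center hp hindex hcenter
    have := normal_of_le_center (range_commutatorHom_le_center hx)
    let q := QuotientGroup.mk' (commutatorHom x hx).range
    have hker : Nat.card q.ker ∣ p ^ n := by
      rw [QuotientGroup.ker_mk']
      exact card_range_commutatorHom_dvd hp hx hxc hindex
    have hmap : Nat.card ((commutator X).map q) ∣ p ^ n.choose 2 := by
      rw [map_commutator_of_surjective (QuotientGroup.mk'_surjective _)]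
      exact ih (index_center_quotient_range_commutatorHom_dvd hp hx hxc hindex)
    rw [Nat.choose_succ_succ', Nat.choose_one_right, pow_add]
    exact (card_dvd_card_ker_mul_card_map q _).trans (mul_dvd_mul hker hmap)

end Wiegold

/-! ### The multiplier inside the free central extension -/

/-- The free central extension `F / [F, R]` of `G`, where `F / R` is the presentation of `G` by its
own elements. -/
abbrev CentralCover (G : Type*) [Group G] : Type _ :=
  FreeGroup G ⧸ ⁅(⊤ : Subgroup (FreeGroup G)), (presentation G).ker⁆

namespace CentralCover

variable {G H L X : Type*} [Group G] [Group H] [Group L] [Group X]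

/-- The canonical set-theoretic section `G → F / [F, R]`. -/
def of (g : G) : CentralCover G := QuotientGroup.mk (FreeGroup.of g)

/-- The projection `F / [F, R] →* F / R = G`. -/
def proj : CentralCover G →* G :=
  QuotientGroup.lift _ (presentation G) (commutator_le_right _ _)

@[simp]
theorem proj_of (g : G) : proj (of g) = g := FreeGroup.lift_apply_of

theorem hom_ext {φ ψ : CentralCover G →* X} (h : ∀ g, φ (of g) = ψ (of g)) : φ = ψ :=
  QuotientGroup.monoidHom_ext _ (FreeGroup.ext_hom _ _ h)

theorem ker_proj_le_center : (proj (G := G)).ker ≤ center (CentralCover G) := by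
  intro r hr
  obtain ⟨r, rfl⟩ := QuotientGroup.mk'_surjective _ r
  rw [mem_center_iff, (QuotientGroup.mk'_surjective _).forall]
  intro u
  rw [← commutatorElement_eq_one_iff_mul_comm, ← map_commutatorElement]
  exact (QuotientGroup.eq_one_iff _).2 (commutator_mem_commutator (mem_top u) hr)

theorem exists_comp_eq_proj {f : X →* G} (hf : Function.Surjective f) (hker : f.ker ≤ center X) :
    ∃ ψ : CentralCover G →* X, f.comp ψ = proj := by
  let ψ : FreeGroup G →* X := FreeGroup.lift (Function.surjInv hf)
  have hψ : f.comp ψ = presentation G :=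
    FreeGroup.ext_hom _ _ fun g => by simp [ψ, presentation, Function.surjInv_eq]
  refine ⟨QuotientGroup.lift _ ψ (commutator_le.2 fun u _ r hr => ?_),
    QuotientGroup.monoidHom_ext _ hψ⟩
  have hr' : ψ r ∈ f.ker := by
    rwa [MonoidHom.mem_ker, ← MonoidHom.comp_apply, hψ]
  rw [MonoidHom.mem_ker, map_commutatorElement,
    commutatorElement_eq_one_of_right_mem_center (hker hr')]

theorem presentation_comp_map (φ : G →* H) :
    (presentation H).comp (FreeGroup.map φ) = φ.comp (presentation G) :=
  FreeGroup.ext_hom _ _ fun g => by simp [presentation]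

/-- Functoriality of `F / [F, R]`. -/
def map (φ : G →* H) : CentralCover G →* CentralCover H :=
  QuotientGroup.map _ _ (FreeGroup.map φ) <| commutator_le.2 fun u _ r hr =>
    mem_comap.2 <| map_commutatorElement (FreeGroup.map φ) u r ▸
      commutator_mem_commutator (mem_top _) (by
        rw [MonoidHom.mem_ker, ← MonoidHom.comp_apply, presentation_comp_map,
          MonoidHom.comp_apply, MonoidHom.mem_ker.1 hr, map_one])

@[simp]
theorem map_of (φ : G →* H) (g : G) : map φ (of g) = of (φ g) := rfl

theorem map_id : map (MonoidHom.id G) = MonoidHom.id (CentralCover G) :=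
  hom_ext fun _ => rfl

theorem map_comp (ψ : H →* L) (φ : G →* H) : map (ψ.comp φ) = (map ψ).comp (map φ) :=
  hom_ext fun _ => rfl

theorem proj_comp_map (φ : G →* H) : proj.comp (map φ) = φ.comp proj :=
  hom_ext fun g => by simp

@[simp]
theorem proj_map (φ : G →* H) (u : CentralCover G) : proj (map φ u) = φ (proj u) :=
  DFunLike.congr_fun (proj_comp_map φ) u

/-- Hopf's formula inside the free central extension: the image `(R ∩ [F, F]) / [F, R]` of the
Schur multiplier in `F / [F, R]`. -/
def multiplier (G : Type*) [Group G] : Subgroup (CentralCover G) :=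
  proj.ker ⊓ commutator (CentralCover G)

theorem multiplier_le_center : multiplier G ≤ center (CentralCover G) :=
  inf_le_left.trans ker_proj_le_center

instance : CommGroup (multiplier G) :=
  { (inferInstance : Group (multiplier G)) with
    mul_comm := fun u v => Subtype.ext (mem_center_iff.1 (multiplier_le_center v.2) u) }

theorem map_mem_multiplier (φ : G →* H) {u : CentralCover G} (hu : u ∈ multiplier G) :
    map φ u ∈ multiplier H := by
  have hcomm : map φ u ∈ ⁅(map φ).range, (map φ).range⁆ :=
    map_commutator_eq _ (map φ) ▸ mem_map_of_mem (map φ) hu.2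
  refine mem_inf.2 ⟨?_, commutator_mono le_top le_top hcomm⟩
  rw [MonoidHom.mem_ker, proj_map, MonoidHom.mem_ker.1 hu.1, map_one]

/-- Functoriality of the Schur multiplier. -/
def multiplierMap (φ : G →* H) : multiplier G →* multiplier H :=
  ((map φ).domRestrict (multiplier G)).codRestrict (multiplier H) fun u =>
    map_mem_multiplier φ u.2

@[simp]
theorem coe_multiplierMap (φ : G →* H) (u : multiplier G) :
    (multiplierMap φ u : CentralCover H) = map φ u := rfl

theorem multiplierMap_id : multiplierMap (MonoidHom.id G) = MonoidHom.id (multiplier G) := by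
  ext u
  exact DFunLike.congr_fun map_id (u : CentralCover G)

theorem multiplierMap_comp (ψ : H →* L) (φ : G →* H) :
    multiplierMap (ψ.comp φ) = (multiplierMap ψ).comp (multiplierMap φ) := by
  ext u
  exact DFunLike.congr_fun (map_comp ψ φ) (u : CentralCover G)

theorem multiplierMap_one : multiplierMap (1 : G →* H) = 1 := by
  have hproj : proj.comp (map (1 : G →* H)) = proj.comp 1 := by
    rw [proj_comp_map, MonoidHom.one_comp, MonoidHom.comp_one]
  ext u
  exact eqOn_commutator_of_comp_eq ker_proj_le_center hproj u.2.2

/-- Isomorphic groups have isomorphic Schur multipliers. -/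
def multiplierCongr (e : G ≃* H) : multiplier G ≃* multiplier H :=
  (multiplierMap e.toMonoidHom).toMulEquiv (multiplierMap e.symm.toMonoidHom)
    (by rw [← multiplierMap_comp, ← multiplierMap_id]; congr; ext; simp)
    (by rw [← multiplierMap_comp, ← multiplierMap_id]; congr; ext; simp)

instance [Finite G] : Finite (multiplier G) := by
  have := finite_commutatorSet_of_ker_le_center (ker_proj_le_center (G := G))
  exact Finite.of_injective _ (inclusion_injective (inf_le_right : multiplier G ≤ commutator _))

theorem index_center_dvd_card : (center (CentralCover G)).index ∣ Nat.card G := by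
  refine (index_dvd_of_le ker_proj_le_center).trans ?_
  rw [index_ker]
  exact card_subgroup_dvd_card _

theorem card_multiplier_dvd_prime_pow {p n : ℕ} (hp : p.Prime) (hG : Nat.card G ∣ p ^ n) :
    Nat.card (multiplier G) ∣ p ^ n.choose 2 :=
  (card_dvd_of_le inf_le_right).trans
    (card_commutator_dvd_prime_pow hp (index_center_dvd_card.trans hG))

end CentralCover

namespace SchurMultiplier

open CentralCover

variable (G : Type*) [Group G]

theorem range_mk'_domRestrict_eq_multiplier :
    ((QuotientGroup.mk' ⁅(⊤ : Subgroup (FreeGroup G)), (presentation G).ker⁆).domRestrict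
      ((presentation G).ker ⊓ commutator (FreeGroup G))).range = multiplier G := by
  rw [MonoidHom.domRestrict_range, multiplier,
    ← map_commutator_of_surjective (QuotientGroup.mk'_surjective _)]
  ext u
  constructor
  · rintro ⟨w, ⟨hw, hw'⟩, rfl⟩
    exact ⟨hw, w, hw', rfl⟩
  · rintro ⟨hu, w, hw', rfl⟩
    exact ⟨w, ⟨hu, hw'⟩, rfl⟩

/-- The second isomorphism theorem, identifying the quotient in Hopf's formula with a subgroup of
`F / [F, R]`. -/
noncomputable def equivMultiplier : SchurMultiplier G ≃* multiplier G :=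
  (QuotientGroup.quotientMulEquivOfEq (by
    rw [MonoidHom.ker_domRestrict, QuotientGroup.ker_mk'])).trans <|
  (QuotientGroup.quotientKerEquivRange _).trans
    (MulEquiv.subgroupCongr (range_mk'_domRestrict_eq_multiplier G))

end SchurMultiplier

/-! ### Tensor products of abelianizations -/

/-- The tensor product `A^ab ⊗ B^ab`, written multiplicatively so that it can be the target of
homomorphisms from `A` and `B`. -/
abbrev AbTensor (A B : Type*) [Group A] [Group B] : Type _ :=
  Multiplicative (TensorProduct ℤ (Additive (Abelianization A)) (Additive (Abelianization B)))

namespace AbTensor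

variable {A B C X : Type*} [Group A] [Group B] [CommGroup C] [Group X]

/-- The universal bimultiplicative map `(a, b) ↦ a ⊗ b`. -/
def mk : A →* B →* AbTensor A B :=
  MonoidHom.mk' (fun a => MonoidHom.mk'
      (fun b => .ofAdd (.ofMul (Abelianization.of a) ⊗ₜ .ofMul (Abelianization.of b)))
      fun b b' => by rw [map_mul, ofMul_mul, TensorProduct.tmul_add, ofAdd_add])
    fun a a' => by
      ext b
      simp [TensorProduct.add_tmul]

theorem closure_range_mk :
    closure (Set.range fun ab : A × B => mk ab.1 ab.2) = ⊤ := by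
  refine eq_top_iff.2 fun t _ => ?_
  induction t using TensorProduct.induction_on with
  | zero => exact one_mem _
  | add s t hs ht => exact mul_mem (hs trivial) (ht trivial)
  | tmul a b =>
    obtain ⟨a, rfl⟩ := QuotientGroup.mk_surjective a
    obtain ⟨b, rfl⟩ := QuotientGroup.mk_surjective b
    exact subset_closure ⟨(a, b), rfl⟩

theorem hom_ext {f g : AbTensor A B →* X} (h : ∀ a b, f (mk a b) = g (mk a b)) : f = g := by
  refine MonoidHom.eq_of_eqOn_dense closure_range_mk ?_
  rintro _ ⟨⟨a, b⟩, rfl⟩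
  exact h a b

/-- The pairing of abelianizations induced by a pairing of groups. -/
def abelianizePairing (c : A →* B →* C) : Abelianization A →* Abelianization B →* C :=
  Abelianization.lift <| MonoidHom.mk' (fun a => Abelianization.lift (c a)) fun a a' =>
    Abelianization.hom_ext _ _ <| MonoidHom.ext fun b => by simp

/-- The homomorphism `a ⊗ b ↦ c a b` induced by a pairing `c`. -/
def lift (c : A →* B →* C) : AbTensor A B →* C :=
  AddMonoidHom.toMultiplicativeLeft <| TensorProduct.liftAddHom
    (AddMonoidHom.mk' (fun a => MonoidHom.toAdditive (abelianizePairing c a.toMul))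
      fun a a' => by ext b; simp)
    fun r a b => by simp

/-- The homomorphism `(bₐ) ↦ ∑ₐ a ⊗ bₐ`, for `a` ranging over a finite set `S`. -/
def prodMk (S : Finset A) : (S → B) →* AbTensor A B :=
  ∏ a : S, (mk (a : A)).comp (Pi.evalMonoidHom _ a)

theorem prodMk_mulSingle [DecidableEq A] (S : Finset A) (a : S) (b : B) :
    prodMk S (Pi.mulSingle a b) = mk (a : A) b := by
  rw [prodMk, MonoidHom.finsetProd_apply, Fintype.prod_eq_single a fun a' ha' => by simp [ha']]
  simp

theorem prodMk_surjective {S : Finset A} (hS : closure (S : Set A) = ⊤) :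
    Function.Surjective (prodMk (B := B) S) := by
  classical
  have hmem (a : A) : ∀ b : B, mk a b ∈ (prodMk (B := B) S).range := by
    induction (hS ▸ mem_top a : a ∈ closure (S : Set A)) using closure_induction with
    | mem a ha => exact fun b => ⟨Pi.mulSingle ⟨a, ha⟩ b, prodMk_mulSingle S ⟨a, ha⟩ b⟩
    | one => simp [one_mem]
    | mul a a' _ _ ha ha' => exact fun b => by simpa using mul_mem (ha b) (ha' b)
    | inv a _ ha => exact fun b => by simpa using ha b
  rw [← MonoidHom.range_eq_top, eq_top_iff, ← closure_range_mk, closure_le]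
  rintro _ ⟨⟨a, b⟩, rfl⟩
  exact hmem a b

theorem card_dvd_pow_rank [Group.FG A] :
    Nat.card (AbTensor A B) ∣ Nat.card B ^ Group.rank A := by
  obtain ⟨S, hcard, hS⟩ := Group.rank_spec A
  have h := card_dvd_of_surjective (prodMk (B := B) S) (prodMk_surjective hS)
  rwa [Nat.card_fun, Nat.card_eq_finsetCard, hcard] at h

end AbTensor

/-! ### Schur's product formula -/

/-- The action of `A` on `C × B` by `a • (t, b) = (t * c a b, b)`, for a pairing `c`. -/
def shear {A B C : Type*} [Group A] [Group B] [CommGroup C] (c : A →* B →* C) :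
    A →* MulAut (C × B) :=
  MonoidHom.mk'
    (fun a =>
      { toFun := fun x => (x.1 * c a x.2, x.2)
        invFun := fun x => (x.1 * (c a x.2)⁻¹, x.2)
        left_inv := fun x => by simp
        right_inv := fun x => by simp
        map_mul' := fun x y => by simp [mul_mul_mul_comm] })
    fun a a' => by
      ext x <;> simp [mul_comm, mul_left_comm]

@[simp]
theorem shear_apply {A B C : Type*} [Group A] [Group B] [CommGroup C] (c : A →* B →* C)
    (a : A) (x : C × B) : shear c a x = (x.1 * c a x.2, x.2) := rfl

/-- The Heisenberg group of a pairing `c : A × B → C`: the central extension of `A × B` by `C` in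
which lifts of `a` and `b` have commutator `c a b`. -/
abbrev Heisenberg {A B C : Type*} [Group A] [Group B] [CommGroup C] (c : A →* B →* C) : Type _ :=
  (C × B) ⋊[shear c] A

namespace Heisenberg

variable {A B C : Type*} [Group A] [Group B] [CommGroup C] (c : A →* B →* C)

/-- The projection of the Heisenberg group onto `A × B`. -/
def proj : Heisenberg c →* A × B :=
  MonoidHom.mk' (fun x => (x.right, x.left.2)) fun _ _ => rfl

theorem proj_surjective : Function.Surjective (proj c) :=
  fun ab => ⟨⟨(1, ab.2), ab.1⟩, rfl⟩

/-- The inclusion of the central subgroup `C`. -/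
def inclusion : C →* Heisenberg c :=
  SemidirectProduct.inl.comp (MonoidHom.inl C B)

theorem inclusion_injective : Function.Injective (inclusion c) :=
  SemidirectProduct.inl_injective.comp (Prod.mk_left_injective 1)

theorem ker_proj_le_center : (proj c).ker ≤ center (Heisenberg c) := by
  rintro ⟨⟨t, b⟩, a⟩ h
  obtain ⟨rfl, rfl⟩ : a = 1 ∧ b = 1 := Prod.ext_iff.1 h
  refine mem_center_iff.2 fun x => SemidirectProduct.ext (Prod.ext ?_ ?_) ?_ <;>
    simp [mul_comm]

theorem commutatorElement_of_proj_eq {a : A} {b : B} {x y : Heisenberg c}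
    (hx : proj c x = (a, 1)) (hy : proj c y = (1, b)) : ⁅x, y⁆ = inclusion c (c a b) := by
  have hxy : ⁅x, y⁆ = ⁅SemidirectProduct.inr a, SemidirectProduct.inl (1, b)⁆ :=
    commutatorElement_eq_of_map_eq (ker_proj_le_center c) hx hy
  rw [hxy, commutatorElement_def, ← map_inv SemidirectProduct.inr, ← SemidirectProduct.inl_aut,
    ← map_inv, ← map_mul]
  simp [inclusion]

end Heisenberg

namespace CentralCover

variable {A B G : Type*} [Group A] [Group B] [Group G]

theorem commutatorElement_mem_multiplier {x y : CentralCover G} (h : Commute (proj x) (proj y)) :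
    ⁅x, y⁆ ∈ multiplier G := by
  refine mem_inf.2 ⟨?_, commutator_mem_commutator (mem_top x) (mem_top y)⟩
  rw [MonoidHom.mem_ker, map_commutatorElement, commutatorElement_eq_one_iff_commute.2 h]

theorem commutatorElement_of_mem_multiplier (a : A) (b : B) :
    ⁅of (a, (1 : B)), of ((1 : A), b)⁆ ∈ multiplier (A × B) :=
  commutatorElement_mem_multiplier (by simpa using MonoidHom.commute_inl_inr a b)

/-- The pairing `(a, b) ↦ ⁅(a, 1), (1, b)⁆` of `A` and `B`, where the commutator is taken between
lifts to the central cover of `A × B`. -/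
def commutatorPairing : A →* B →* multiplier (A × B) :=
  let c (a : A) (b : B) : multiplier (A × B) :=
    ⟨⁅of (a, 1), of (1, b)⁆, commutatorElement_of_mem_multiplier a b⟩
  MonoidHom.mk'
    (fun a => MonoidHom.mk' (c a) fun b b' => Subtype.ext <|
      (commutatorElement_eq_of_map_eq ker_proj_le_center rfl (by simp)).trans <|
        commutatorElement_mul_right_of_mem_center (y := of (1, b)) (z := of (1, b')) <|
          multiplier_le_center (c a b').2)
    fun a a' => MonoidHom.ext fun b => Subtype.ext <|
      (commutatorElement_eq_of_map_eq ker_proj_le_center (by simp) rfl).trans <|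
        commutatorElement_mul_left_of_mem_center (x := of (a, 1)) (y := of (a', 1)) <|
          multiplier_le_center (c a' b).2

/-- The homomorphism `a ⊗ b ↦ ⁅a, b⁆` from `A^ab ⊗ B^ab` to the multiplier of `A × B`. -/
def tensorToMultiplier : AbTensor A B →* multiplier (A × B) :=
  AbTensor.lift commutatorPairing

theorem coe_tensorToMultiplier_mk {a : A} {b : B} {x y : CentralCover (A × B)}
    (hx : proj x = (a, 1)) (hy : proj y = (1, b)) :
    (tensorToMultiplier (AbTensor.mk a b) : CentralCover (A × B)) = ⁅x, y⁆ :=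
  commutatorElement_eq_of_map_eq ker_proj_le_center (by simp [hx]) (by simp [hy])

theorem tensorToMultiplier_injective :
    Function.Injective (tensorToMultiplier (A := A) (B := B)) := by
  let c : A →* B →* AbTensor A B := AbTensor.mk
  obtain ⟨ψ, hψ⟩ := exists_comp_eq_proj (Heisenberg.proj_surjective c)
    (Heisenberg.ker_proj_le_center c)
  have hψ' (u : CentralCover (A × B)) : Heisenberg.proj c (ψ u) = proj u :=
    DFunLike.congr_fun hψ u
  have hincl : (ψ.comp (multiplier (A × B)).subtype).comp tensorToMultiplier =
      Heisenberg.inclusion c := by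
    refine AbTensor.hom_ext fun a b => ?_
    rw [MonoidHom.comp_apply, MonoidHom.comp_apply, subtype_apply,
      coe_tensorToMultiplier_mk (proj_of _) (proj_of _), map_commutatorElement]
    exact Heisenberg.commutatorElement_of_proj_eq c (by simp [hψ']) (by simp [hψ'])
  refine Function.Injective.of_comp (f := ψ.comp (multiplier (A × B)).subtype) ?_
  rw [← MonoidHom.coe_comp, hincl]
  exact Heisenberg.inclusion_injective c

theorem multiplierMap_fst_comp_tensorToMultiplier :
    (multiplierMap (MonoidHom.fst A B)).comp tensorToMultiplier = 1 := by
  refine AbTensor.hom_ext fun a b => Subtype.ext ?_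
  rw [MonoidHom.comp_apply, coe_multiplierMap,
    coe_tensorToMultiplier_mk (proj_of _) (proj_of _), map_commutatorElement]
  exact commutatorElement_eq_one_of_right_mem_center (ker_proj_le_center (by simp))

theorem multiplierMap_snd_comp_tensorToMultiplier :
    (multiplierMap (MonoidHom.snd A B)).comp tensorToMultiplier = 1 := by
  refine AbTensor.hom_ext fun a b => Subtype.ext ?_
  rw [MonoidHom.comp_apply, coe_multiplierMap,
    coe_tensorToMultiplier_mk (proj_of _) (proj_of _), map_commutatorElement]
  exact commutatorElement_eq_one_of_left_mem_center (ker_proj_le_center (by simp))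

theorem commutatorElement_map_inl_map_inr (u : CentralCover A) (v : CentralCover B) :
    ⁅map (MonoidHom.inl A B) u, map (MonoidHom.inr A B) v⁆ =
      tensorToMultiplier (AbTensor.mk (proj u) (proj v)) :=
  (coe_tensorToMultiplier_mk (by simp) (by simp)).symm

-- Modulo the image `Z` of the tensor product, the lifts of `A` and `B` commute. The quotient map
-- `E → E / Z` and the composite `E → E_A × E_B → E / Z` then lie over the same map to `A × B`, so
-- they agree on commutators.
theorem exists_eq_mul_tensorToMultiplier {x : CentralCover (A × B)}
    (hx : x ∈ commutator (CentralCover (A × B))) :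
    ∃ t : AbTensor A B,
      x = map (MonoidHom.inl A B) (map (MonoidHom.fst A B) x) *
        map (MonoidHom.inr A B) (map (MonoidHom.snd A B) x) * tensorToMultiplier t := by
  let Z := ((multiplier (A × B)).subtype.comp tensorToMultiplier).range
  have hZ : Z ≤ proj.ker := by
    rintro _ ⟨t, rfl⟩
    exact (tensorToMultiplier t).2.1
  have : Z.Normal := normal_of_le_center (hZ.trans ker_proj_le_center)
  let q := QuotientGroup.mk' Z
  let f : CentralCover (A × B) ⧸ Z →* A × B := QuotientGroup.lift Z proj hZ
  have hf : f.ker ≤ center _ := ker_lift_le_center ker_proj_le_center hZ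
  let δ := (q.comp (map (MonoidHom.inl A B))).noncommCoprod (q.comp (map (MonoidHom.inr A B)))
    fun u v => by
      rw [← commutatorElement_eq_one_iff_commute, MonoidHom.comp_apply, MonoidHom.comp_apply,
        ← map_commutatorElement, commutatorElement_map_inl_map_inr]
      exact (QuotientGroup.eq_one_iff _).2 ⟨AbTensor.mk (proj u) (proj v), rfl⟩
  have hδ : f.comp (δ.comp ((map (MonoidHom.fst A B)).prod (map (MonoidHom.snd A B)))) =
      f.comp q :=
    hom_ext fun ab => by simp [f, δ, q]
  obtain ⟨t, ht⟩ := QuotientGroup.eq.1 (eqOn_commutator_of_comp_eq hf hδ hx)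
  exact ⟨t, (mul_eq_of_eq_inv_mul ht).symm⟩

/-- The homomorphism `M(A) × M(B) × (A^ab ⊗ B^ab) →* M(A × B)` of Schur's product formula. -/
def prodToMultiplier : multiplier A × multiplier B × AbTensor A B →* multiplier (A × B) :=
  (multiplierMap (MonoidHom.inl A B)).coprod
    ((multiplierMap (MonoidHom.inr A B)).coprod tensorToMultiplier)

theorem multiplierMap_fst_comp_prodToMultiplier :
    (multiplierMap (MonoidHom.fst A B)).comp prodToMultiplier = MonoidHom.fst _ _ := by
  rw [prodToMultiplier, MonoidHom.comp_coprod, MonoidHom.comp_coprod, ← multiplierMap_comp,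
    ← multiplierMap_comp, MonoidHom.fst_comp_inl, MonoidHom.fst_comp_inr,
    multiplierMap_fst_comp_tensorToMultiplier, multiplierMap_id, multiplierMap_one]
  ext : 1; simp

theorem multiplierMap_snd_comp_prodToMultiplier :
    (multiplierMap (MonoidHom.snd A B)).comp prodToMultiplier =
      (MonoidHom.fst _ _).comp (MonoidHom.snd _ _) := by
  rw [prodToMultiplier, MonoidHom.comp_coprod, MonoidHom.comp_coprod, ← multiplierMap_comp,
    ← multiplierMap_comp, MonoidHom.snd_comp_inl, MonoidHom.snd_comp_inr,
    multiplierMap_snd_comp_tensorToMultiplier, multiplierMap_id, multiplierMap_one]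
  ext : 1; simp

theorem prodToMultiplier_injective :
    Function.Injective (prodToMultiplier (A := A) (B := B)) := by
  rw [injective_iff_map_eq_one]
  rintro ⟨u, v, t⟩ h
  obtain rfl : 1 = u := by
    simpa [h] using DFunLike.congr_fun multiplierMap_fst_comp_prodToMultiplier (u, v, t)
  obtain rfl : 1 = v := by
    simpa [h] using DFunLike.congr_fun multiplierMap_snd_comp_prodToMultiplier (1, v, t)
  have ht : tensorToMultiplier t = 1 := by simpa [prodToMultiplier] using h
  rw [tensorToMultiplier_injective (ht.trans (map_one _).symm)]
  rfl

theorem prodToMultiplier_surjective :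
    Function.Surjective (prodToMultiplier (A := A) (B := B)) := by
  intro x
  obtain ⟨t, ht⟩ := exists_eq_mul_tensorToMultiplier x.2.2
  refine ⟨(multiplierMap (MonoidHom.fst A B) x, multiplierMap (MonoidHom.snd A B) x, t),
    Subtype.ext ?_⟩
  simpa [prodToMultiplier, mul_assoc] using ht.symm

/-- Schur's product formula `M(A) × M(B) × (A^ab ⊗ B^ab) ≃ M(A × B)`. -/
noncomputable def multiplierProdEquiv :
    multiplier A × multiplier B × AbTensor A B ≃* multiplier (A × B) :=
  .ofBijective prodToMultiplier ⟨prodToMultiplier_injective, prodToMultiplier_surjective⟩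

end CentralCover

section InternalProduct

variable {G : Type*} [Group G] {N K : Subgroup G} [N.Normal] [K.Normal]

theorem commute_subtype_of_disjoint (h : Disjoint N K) (x : N) (y : K) :
    Commute (N.subtype x) (K.subtype y) :=
  commute_of_normal_of_disjoint N K ‹_› ‹_› h x y x.2 y.2

theorem bijective_noncommCoprod_of_isCompl (h : IsCompl N K) :
    Function.Bijective
      (N.subtype.noncommCoprod K.subtype (commute_subtype_of_disjoint h.disjoint)) := by
  rw [Function.Bijective, MonoidHom.noncommCoprod_injective, ← MonoidHom.range_eq_top,
    MonoidHom.noncommCoprod_range, range_subtype, range_subtype]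
  exact ⟨⟨N.subtype_injective, K.subtype_injective, h.disjoint⟩, h.sup_eq_top⟩

/-- A group is the direct product of two complementary normal subgroups. -/
noncomputable def prodEquivOfIsCompl (h : IsCompl N K) : N × K ≃* G :=
  .ofBijective _ (bijective_noncommCoprod_of_isCompl h)

end InternalProduct

namespace SchurMultiplier

variable {G : Type*} [Group G] {N K : Subgroup G} [N.Normal] [K.Normal]

open CentralCover

theorem card_eq_of_isCompl (h : IsCompl N K) :
    Nat.card (SchurMultiplier G) = Nat.card (SchurMultiplier N) *
      (Nat.card (SchurMultiplier K) * Nat.card (AbTensor N K)) := by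
  have e := (((equivMultiplier N).prodCongr ((equivMultiplier K).prodCongr (.refl (AbTensor N K))))
    |>.trans multiplierProdEquiv).trans
      ((multiplierCongr (prodEquivOfIsCompl h)).trans (equivMultiplier G).symm)
  rw [← Nat.card_congr e.toEquiv, Nat.card_prod, Nat.card_prod]

instance [Finite G] : Finite (SchurMultiplier G) :=
  .of_equiv _ (equivMultiplier G).symm.toEquiv

theorem card_dvd_prime_pow {p n : ℕ} (hp : p.Prime) (hG : Nat.card G ∣ p ^ n) :
    Nat.card (SchurMultiplier G) ∣ p ^ n.choose 2 :=
  Nat.card_congr (equivMultiplier G).toEquiv ▸ card_multiplier_dvd_prime_pow hp hG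

theorem card_eq_of_mulEquiv_prod [Finite K] (h : IsCompl N K) {L : Type*} [Group L]
    (e : SchurMultiplier G ≃* L × SchurMultiplier K) :
    Nat.card L = Nat.card (SchurMultiplier N) * Nat.card (AbTensor N K) := by
  have hcard : Nat.card L * Nat.card (SchurMultiplier K) =
      Nat.card (SchurMultiplier N) * Nat.card (AbTensor N K) * Nat.card (SchurMultiplier K) := by
    rw [← Nat.card_prod, ← Nat.card_congr e.toEquiv, card_eq_of_isCompl h]
    ring
  exact Nat.eq_of_mul_eq_mul_right Nat.card_pos hcard

end SchurMultiplier

theorem choose_two_add_mul_eq_div_two (n m : ℕ) :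
    n.choose 2 + m * n = n * (2 * m + n - 1) / 2 := by
  cases n with
  | zero => simp
  | succ n =>
    have hexpand : (n + 1) * (2 * m + (n + 1) - 1) = (n + 1) * n + 2 * (m * (n + 1)) := by
      rw [← add_assoc, Nat.add_sub_cancel]
      ring
    rw [hexpand, Nat.add_mul_div_left _ _ two_pos, Nat.choose_two_right, Nat.add_sub_cancel]

theorem card_pair_schur_multiplier_general (p n : ℕ) (hp : p.Prime)
    (G : Type*) [Group G] (N K : Subgroup G) [N.Normal] [K.Normal] [Finite K]
    (hN : Nat.card N = p ^ n) (hinf : N ⊓ K = ⊥) (hsup : N ⊔ K = ⊤)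
    (MGN : Type*) [Group MGN]
    (hsplit : Nonempty (SchurMultiplier G ≃* MGN × SchurMultiplier K)) :
    Nat.card MGN =
        Nat.card (SchurMultiplier N) *
          Nat.card (TensorProduct ℤ (Additive (Abelianization N))
            (Additive (Abelianization K))) ∧
      Nat.card MGN ∣ p ^ n.choose 2 * Nat.card K ^ n := by
  have : Finite N := Nat.finite_of_card_ne_zero (hN ▸ pow_ne_zero n hp.ne_zero)
  have hcard : Nat.card MGN = Nat.card (SchurMultiplier N) * Nat.card (AbTensor N K) :=
    SchurMultiplier.card_eq_of_mulEquiv_prod (IsCompl.of_eq hinf hsup) hsplit.some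
  have hgreen : Nat.card (SchurMultiplier N) ∣ p ^ n.choose 2 :=
    SchurMultiplier.card_dvd_prime_pow hp hN.dvd
  have htensor : Nat.card (AbTensor N K) ∣ Nat.card K ^ n :=
    AbTensor.card_dvd_pow_rank.trans
      (pow_dvd_pow _ (rank_le_of_card_dvd_prime_pow hp hN.dvd))
  exact ⟨hcard, hcard ▸ mul_dvd_mul hgreen htensor⟩

theorem card_pair_schur_multiplier (p n m : ℕ) (hp : p.Prime)
    (G : Type*) [Group G] [Finite G] (hG : IsPGroup p G)
    (N K : Subgroup G) [N.Normal] [K.Normal]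
    (hN : Nat.card N = p ^ n) (hK : Nat.card K = p ^ m)
    (hinf : N ⊓ K = ⊥) (hsup : N ⊔ K = ⊤)
    (MGN : Type*) [Group MGN]
    (hsplit : Nonempty (SchurMultiplier G ≃* MGN × SchurMultiplier K)) :
    Nat.card MGN =
        Nat.card (SchurMultiplier N) *
          Nat.card (TensorProduct ℤ (Additive (Abelianization N))
            (Additive (Abelianization K))) ∧
      Nat.card MGN ∣ p ^ (n * (2 * m + n - 1) / 2) := by
  have hpow : Nat.card K ^ n = p ^ (m * n) := by rw [hK, pow_mul]
  rw [← choose_two_add_mul_eq_div_two, pow_add, ← hpow]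
  exact card_pair_schur_multiplier_general p n hp G N K hN hinf hsup MGN hsplit
end
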